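/- arXiv:2212.14265 — 3 statements merged into one kernel-verified Lean document; each statement's English description precedes it below -/
import Mathlib

section
/- For every n ≥ 5, the set of tuples (t₁,…,tₙ) ∈ ℝⁿ with the property that, setting p_i = (t_i, t_i², t_i³, t_i⁴) ∈ ℝ⁴, for every 2-triangulation T of the n-gon the rows of the bar-and-joint rigidity matrix R(p₁,…,pₙ) indexed by T are linearly independent, is open and dense in ℝⁿ. (Since every 2-triangulation has 4n−10 elements, which equals the rank of R(p), such rows then form a basis of the row space; i.e., 2-triangulations are isostatic for generic positions along the moment curve in dimension 4.) -/
open scoped BigOperators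

/-- A pair `{i,j}` of distinct vertices of the `n`-gon.  Vertices `1,…,n` are represented by
`Fin n` (vertex `i` corresponds to `i-1 : Fin n`), and a pair is recorded with its endpoints
in increasing order. -/
abbrev Pair (n : ℕ) := {p : Fin n × Fin n // p.1 < p.2}

/-- Two pairs `{i,j}` (`i<j`) and `{k,l}` (`k<l`) cross if `i<k<j<l` or `k<i<l<j`. -/
def Cross {n : ℕ} (e f : Pair n) : Prop :=
  (e.val.1 < f.val.1 ∧ f.val.1 < e.val.2 ∧ e.val.2 < f.val.2) ∨
  (f.val.1 < e.val.1 ∧ e.val.1 < f.val.2 ∧ f.val.2 < e.val.2)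

/-- A set of pairs is `(k+1)`-crossing-free if it contains no `k+1` pairwise crossing pairs. -/
def CrossingFree (n k : ℕ) (S : Set (Pair n)) : Prop :=
  ¬ ∃ C : Finset (Pair n), ↑C ⊆ S ∧ C.card = k + 1 ∧
      ∀ e ∈ C, ∀ f ∈ C, e ≠ f → Cross e f

/-- A `k`-triangulation of the `n`-gon: an inclusion-maximal `(k+1)`-crossing-free set. -/
def IsTriangulation (n k : ℕ) (T : Set (Pair n)) : Prop :=
  CrossingFree n k T ∧ ∀ S : Set (Pair n), CrossingFree n k S → T ⊆ S → S = T

/-- The length of a pair `{i,j}` with respect to the `N`-gon: `min (j-i) (N-(j-i))`. -/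
def pairLen (N : ℕ) {n : ℕ} (e : Pair n) : ℕ :=
  min ((e.val.2 : ℕ) - (e.val.1 : ℕ)) (N - ((e.val.2 : ℕ) - (e.val.1 : ℕ)))

/-- A pair is `k`-relevant in the `N`-gon if its length is at least `k+1`. -/
def Relevant (N k : ℕ) {n : ℕ} (e : Pair n) : Prop := k + 1 ≤ pairLen N e

/-- The 2×2 determinant `det (u v)` of two plane vectors. -/
def det2 (u v : ℝ × ℝ) : ℝ := u.1 * v.2 - u.2 * v.1

/-- Points in convex position, listed in counterclockwise order along their convex hull:
they are distinct and every triple `i<j<k` is positively oriented. -/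
def ConvexPosition {n : ℕ} (q : Fin n → ℝ × ℝ) : Prop :=
  Function.Injective q ∧
  ∀ i j k : Fin n, i < j → j < k → 0 < det2 (q j - q i) (q k - q i)

/-- `p` lies on the line through `a` and `b`. -/
def onLine (a b p : ℝ × ℝ) : Prop := det2 (b - a) (p - a) = 0

/-- Row of the bar-and-joint rigidity matrix `R(p)` indexed by the pair `e`:
`p_i - p_j` in block `i`, `p_j - p_i` in block `j`, zeros elsewhere. -/
def bjRow {n d : ℕ} (p : Fin n → Fin d → ℝ) (e : Pair n) : Fin n × Fin d → ℝ :=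
  fun ma =>
    if ma.1 = e.val.1 then p e.val.1 ma.2 - p e.val.2 ma.2
    else if ma.1 = e.val.2 then p e.val.2 ma.2 - p e.val.1 ma.2
    else 0

/-- Row of the hyperconnectivity matrix `H(p)` indexed by the pair `e`:
`p_j` in block `i`, `-p_i` in block `j`, zeros elsewhere. -/
def hypRow {n d : ℕ} (p : Fin n → Fin d → ℝ) (e : Pair n) : Fin n × Fin d → ℝ :=
  fun ma =>
    if ma.1 = e.val.1 then p e.val.2 ma.2
    else if ma.1 = e.val.2 then - p e.val.1 ma.2
    else 0

/-- The vector `c_{ij} = ((x_i-x_j)^{d-1}, (x_i-x_j)^{d-2}(y_i-y_j), …, (y_i-y_j)^{d-1})`. -/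
def cvec (d : ℕ) (qi qj : ℝ × ℝ) : Fin d → ℝ :=
  fun a => (qi.1 - qj.1) ^ (d - 1 - (a : ℕ)) * (qi.2 - qj.2) ^ (a : ℕ)

/-- Row of the cofactor rigidity matrix `C_d(q)` indexed by the pair `e`:
`c_{ij}` in block `i`, `-c_{ij}` in block `j`, zeros elsewhere. -/
def cofRow (d : ℕ) {n : ℕ} (q : Fin n → ℝ × ℝ) (e : Pair n) : Fin n × Fin d → ℝ :=
  fun ma =>
    if ma.1 = e.val.1 then cvec d (q e.val.1) (q e.val.2) ma.2
    else if ma.1 = e.val.2 then - cvec d (q e.val.1) (q e.val.2) ma.2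
    else 0

/-- `x_{ij} = X_i Z_j - Z_i X_j` for vectors in `ℝ³`. -/
def xQ (Qi Qj : ℝ × ℝ × ℝ) : ℝ := Qi.1 * Qj.2.2 - Qi.2.2 * Qj.1

/-- `y_{ij} = Y_i Z_j - Z_i Y_j` for vectors in `ℝ³`. -/
def yQ (Qi Qj : ℝ × ℝ × ℝ) : ℝ := Qi.2.1 * Qj.2.2 - Qi.2.2 * Qj.2.1

/-- The vector `c_{ij} = (x_{ij}^{d-1}, x_{ij}^{d-2} y_{ij}, …, y_{ij}^{d-1})`. -/
def gcvec (d : ℕ) (Qi Qj : ℝ × ℝ × ℝ) : Fin d → ℝ :=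
  fun a => (xQ Qi Qj) ^ (d - 1 - (a : ℕ)) * (yQ Qi Qj) ^ (a : ℕ)

/-- Row of the generalized cofactor rigidity matrix `C_d(Q)` for vectors in `ℝ³`. -/
def gcofRow (d : ℕ) {n : ℕ} (Q : Fin n → ℝ × ℝ × ℝ) (e : Pair n) : Fin n × Fin d → ℝ :=
  fun ma =>
    if ma.1 = e.val.1 then gcvec d (Q e.val.1) (Q e.val.2) ma.2
    else if ma.1 = e.val.2 then - gcvec d (Q e.val.1) (Q e.val.2) ma.2
    else 0

/-- The cone of all nonnegative linear combinations of `{v e : e ∈ S}`. -/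
def coneOf {n : ℕ} {V : Type*} [AddCommGroup V] [Module ℝ V]
    (v : Pair n → V) (S : Set (Pair n)) : Set V :=
  {x | ∃ c : Pair n → ℝ, (∀ e, 0 ≤ c e) ∧ (∀ e, c e ≠ 0 → e ∈ S) ∧ x = ∑ e, c e • v e}

/-- The vectors `(v e)` realize the `k`-associahedron of the `n`-gon as a complete
simplicial fan: (a) the vectors of every `k`-triangulation are linearly independent;
(b) cones of two `k`-triangulations intersect in the cone of their intersection;
(c) the union of all the cones is the linear span of all the vectors. -/
def RealizesFan (n k : ℕ) {V : Type*} [AddCommGroup V] [Module ℝ V]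
    (v : Pair n → V) : Prop :=
  (∀ T : Set (Pair n), IsTriangulation n k T →
      LinearIndependent ℝ (fun e : T => v e.val)) ∧
  (∀ T T' : Set (Pair n), IsTriangulation n k T → IsTriangulation n k T' →
      coneOf v T ∩ coneOf v T' = coneOf v (T ∩ T')) ∧
  (⋃ T ∈ {T : Set (Pair n) | IsTriangulation n k T}, coneOf v T) =
    (Submodule.span ℝ (Set.range v) : Set V)

/-- The set of parameter tuples `t` along the moment curve in `ℝ⁴` for which every
2-triangulation of the `n`-gon indexes linearly independent rows of the bar-and-joint rigidity
matrix. -/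
def goodSet (n : ℕ) : Set (Fin n → ℝ) :=
  {t | ∀ T : Set (Pair n), IsTriangulation n 2 T →
    LinearIndependent ℝ
      (fun e : T => bjRow (fun i (a : Fin 4) => t i ^ ((a : ℕ) + 1)) e.val)}

/-!
Divide the row of the pair `{i, j}` by `t i - t j`. Its entries are then divided differences of the
moment curve, which make sense also when `t i = t j`, so neighbouring vertices may be merged.

Let a graph `G` arise from `G'` by splitting a vertex into two consecutive ones, `u` and `v`, with
at most three common neighbours, and give `u` and `v` the same parameter. A stress of `G` pushes
forward to a stress of `G'`. If `G'` is independent, the push-forward vanishes, so the stress at `u`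
is supported on `v` and the common neighbours of `u` and `v`; these give at most four slopes at one
point of the moment curve in `ℝ⁴`, which are independent by Vandermonde. Hence `G` is independent,
and it stays so after a small perturbation making the parameters distinct.

A graph without three pairwise crossing edges always has such a pair of consecutive vertices: if
`{i, l}` is a shortest edge with `l ≥ i + 3`, then `i + 1` and `i + 2` have no common neighbours in
`[i, l]` other than `i` and `i + 3`, and at most one outside, since two would create three
pairwise crossing edges. Contracting consecutive vertices creates no three pairwise crossing edges,
so induction yields one independent position for every 2-triangulation. Independence is the
nonvanishing of an analytic minor, so it then holds on an open dense set.
-/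

open Function Set Topology

/-! ### Linear independence in general position -/

section Generic

variable {E F ι : Type*}

theorem isOpen_setOfPred_linearIndependent_of_continuous [TopologicalSpace E]
    [NormedAddCommGroup F] [NormedSpace ℝ F] [Finite ι] {v : E → ι → F} (hv : Continuous v) :
    IsOpen {x | LinearIndependent ℝ (v x)} :=
  isOpen_setOfPred_linearIndependent.preimage hv

theorem exists_linearMap_apply_eq_single {K : Type*} [Field K] [AddCommGroup F] [Module K F]
    [Finite ι] [DecidableEq ι] {v : ι → F} (hv : LinearIndependent K v) :
    ∃ g : F →ₗ[K] ι → K, ∀ i, g (v i) = Pi.single i 1 := by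
  have := Fintype.ofFinite ι
  obtain ⟨g, hg⟩ := (Fintype.linearCombination K v).exists_leftInverse_of_injective
    (LinearMap.ker_eq_bot.2 (linearIndependent_iff_injective_fintypeLinearCombination.1 hv))
  exact ⟨g, fun i => by simpa using LinearMap.congr_fun hg (Pi.single i 1)⟩

theorem linearIndependent_smul_of_ne_zero {K : Type*} [DivisionRing K] [AddCommGroup F] [Module K F]
    {v : ι → F} (hv : LinearIndependent K v) {c : ι → K} (hc : ∀ i, c i ≠ 0) :
    LinearIndependent K fun i => c i • v i :=
  hv.units_smul fun i => Units.mk0 (c i) (hc i)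

theorem linearIndependent_pow_of_injective {R : Type*} [CommRing R] [IsDomain R] [Fintype ι] {d : ℕ}
    (hd : Fintype.card ι ≤ d) {x : ι → R} (hx : Injective x) :
    LinearIndependent R fun i (j : Fin d) => x i ^ (j : ℕ) := by
  refine Fintype.linearIndependent_iff.2 fun c hc i => ?_
  let e := Fintype.equivFin ι
  have hpow (j : Fin (Fintype.card ι)) :
      ∑ k, c (e.symm k) * x (e.symm k) ^ (j : ℕ) = 0 := by
    rw [e.symm.sum_comp fun i => c i * x i ^ (j : ℕ)]
    simpa using congrFun hc (j.castLE hd)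
  have hzero := Matrix.eq_zero_of_forall_pow_sum_mul_pow_eq_zero (hx.comp e.symm.injective) hpow
  simpa using congrFun hzero (e i)

variable [NormedAddCommGroup E] [NormedSpace ℝ E]

theorem dense_setOfPred_ne_zero_of_analyticOnNhd {f : E → ℝ} (hf : AnalyticOnNhd ℝ f univ)
    (hne : ∃ x, f x ≠ 0) : Dense {x | f x ≠ 0} := by
  obtain ⟨x₀, hx₀⟩ := hne
  refine interior_eq_empty_iff_dense_compl.1 (eq_empty_iff_forall_notMem.2 fun x hx => hx₀ ?_)
  have hzero : f =ᶠ[𝓝 x] 0 := mem_interior_iff_mem_nhds.1 hx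
  exact congrFun (hf.eq_of_eventuallyEq analyticOnNhd_const hzero) x₀

theorem dense_setOfPred_linearIndependent_of_analyticOnNhd [Finite ι] [NormedAddCommGroup F]
    [NormedSpace ℝ F] [FiniteDimensional ℝ F] {v : E → ι → F}
    (hv : ∀ i, AnalyticOnNhd ℝ (fun x => v x i) univ)
    (hne : ∃ x, LinearIndependent ℝ (v x)) : Dense {x | LinearIndependent ℝ (v x)} := by
  classical
  have := Fintype.ofFinite ι
  obtain ⟨x₀, hx₀⟩ := hne
  obtain ⟨g, hg⟩ := exists_linearMap_apply_eq_single hx₀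
  let minor (x : E) : ℝ := (Matrix.of fun i => g (v x i)).det
  have hminor : AnalyticOnNhd ℝ minor univ := fun x _ => by
    have hentry (i j : ι) : AnalyticAt ℝ (fun x => g (v x i) j) x :=
      ((LinearMap.proj j ∘ₗ g).toContinuousLinearMap.analyticAt _).comp (hv i x (mem_univ x))
    simp only [minor, Matrix.det_apply', Matrix.of_apply]
    exact Finset.univ.analyticAt_fun_sum fun σ _ =>
      analyticAt_const.mul (Finset.univ.analyticAt_fun_prod fun i _ => hentry (σ i) i)
  have hminor_ne : minor x₀ ≠ 0 := by
    have hone : (Matrix.of fun i => g (v x₀ i)) = 1 := by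
      ext i j
      simp [hg, Matrix.one_apply, Pi.single_apply, eq_comm]
    simp [minor, hone]
  refine (dense_setOfPred_ne_zero_of_analyticOnNhd hminor ⟨x₀, hminor_ne⟩).mono fun x hx => ?_
  exact .of_comp g (Matrix.linearIndependent_rows_of_det_ne_zero hx)

theorem analyticAt_eval [Fintype ι] (i : ι) (t : ι → ℝ) : AnalyticAt ℝ (fun t : ι → ℝ => t i) t :=
  (ContinuousLinearMap.proj (R := ℝ) (φ := fun _ : ι => ℝ) i).analyticAt t

theorem dense_setOfPred_injective [Finite ι] : Dense {t : ι → ℝ | Injective t} := by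
  classical
  have := Fintype.ofFinite ι
  have hinter : {t : ι → ℝ | Injective t} =
      ⋂ e : {e : ι × ι // e.1 ≠ e.2}, {t | t e.1.1 - t e.1.2 ≠ 0} := by
    ext t
    simp [Injective, sub_eq_zero, not_imp_not]
  rw [hinter]
  refine dense_iInter_of_isOpen (fun e => isOpen_ne_fun (by fun_prop) continuous_const)
    fun ⟨⟨i, j⟩, hij⟩ => dense_setOfPred_ne_zero_of_analyticOnNhd
      (fun t _ => (analyticAt_eval i t).sub (analyticAt_eval j t)) ⟨Pi.single i 1, ?_⟩
  simp [hij.symm]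

end Generic

/-! ### Stresses and contractions -/

section Stress

variable {V W E : Type*}

/-- The map `f` identifies the vertices `u` and `v` and no others. -/
structure IsContraction (f : V → W) (u v : V) : Prop where
  ne : u ≠ v
  map_eq : f u = f v
  eq_of_map_eq : ∀ x y, f x = f y → x = y ∨ x = u ∧ y = v ∨ x = v ∧ y = u

theorem IsContraction.map_left_ne {f : V → W} {u v : V} (hf : IsContraction f u v) {y : V}
    (hu : y ≠ u) (hv : y ≠ v) : f u ≠ f y := by
  intro h
  have := hf.eq_of_map_eq u y h
  grind

theorem IsContraction.injOn_compl_left {f : V → W} {u v : V} (hf : IsContraction f u v) :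
    InjOn f {u}ᶜ := by
  intro x hx y hy h
  have := hf.eq_of_map_eq x y h
  grind

variable [AddCommGroup E]

/-- The row of the edge `xy` in a rigidity-type matrix: it has `D x y` in the block of `x` and
`D y x` in the block of `y`. The bar-and-joint rigidity matrix is the case `D x y = p x - p y`.
The value at a loop is irrelevant. -/
def edgeRow [DecidableEq V] (D : V → V → E) : Sym2 V → V → E :=
  Sym2.lift ⟨fun x y => Pi.single x (D x y) + Pi.single y (D y x), fun _ _ => add_comm _ _⟩

theorem edgeRow_apply_of_ne [DecidableEq V] (D : V → V → E) {x y : V} (hxy : x ≠ y) :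
    edgeRow D s(x, y) x = D x y := by
  simp [edgeRow, hxy]

theorem edgeRow_apply_of_notMem [DecidableEq V] (D : V → V → E) {x : V} {e : Sym2 V}
    (hx : x ∉ e) : edgeRow D e x = 0 := by
  induction e with | _ y z
  rw [Sym2.mem_iff, not_or] at hx
  simp [edgeRow, hx.1, hx.2]

variable [Module ℝ E]

/-- The rows of the edges of `G` are linearly independent. -/
def IsIndependent [DecidableEq V] (G : SimpleGraph V) (D : V → V → E) : Prop :=
  LinearIndependent ℝ fun e : G.edgeSet => edgeRow D e

variable {G : SimpleGraph V} {D : V → V → E} {ω : Sym2 V → ℝ}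

-- Action equals reaction, so the forces inside a set of vertices cancel.
theorem sum_sum_smul_eq_zero_of_antisymm (hD : ∀ x y, D x y = -D y x) (ω : Sym2 V → ℝ)
    (s : Finset V) : ∑ x ∈ s, ∑ y ∈ s, ω s(x, y) • D x y = 0 := by
  have := IsAddTorsionFree.of_isTorsionFree ℝ E
  refine self_eq_neg.1 ?_
  conv_lhs => rw [Finset.sum_comm]
  simp only [← Finset.sum_neg_distrib, ← smul_neg, ← hD, Sym2.eq_swap]

variable [Fintype V]

/-- An equilibrium stress: weights on the edges of `G` for which the forces `ω s(x, y) • D x y`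
balance at every vertex. The weights are extended by zero to all of `Sym2 V`. -/
structure IsStress (G : SimpleGraph V) (D : V → V → E) (ω : Sym2 V → ℝ) : Prop where
  eq_zero_of_notMem : ∀ e ∉ G.edgeSet, ω e = 0
  equilibrium : ∀ x, ∑ y, ω s(x, y) • D x y = 0

theorem IsStress.eq_zero_of_not_adj (h : IsStress G D ω) {x y : V} (hxy : ¬G.Adj x y) :
    ω s(x, y) = 0 :=
  h.eq_zero_of_notMem _ hxy

theorem sum_smul_edgeRow_apply [DecidableEq V] (D : V → V → E) (hω : ∀ x, ω s(x, x) = 0) (x : V) :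
    (∑ e, ω e • edgeRow D e) x = ∑ y, ω s(x, y) • D x y := by
  rw [Finset.sum_apply]
  refine (Fintype.sum_of_injective (fun y => s(x, y)) (fun _ _ h => Sym2.congr_right.1 h)
    _ _ (fun e he => ?_) fun y => ?_).symm
  · have hx : x ∉ e := fun hx => he ⟨_, Sym2.other_spec hx⟩
    simp [edgeRow_apply_of_notMem D hx]
  · obtain rfl | hxy := eq_or_ne x y
    · simp [hω]
    · simp [edgeRow_apply_of_ne D hxy]

theorem isStress_iff_sum_smul_edgeRow_eq_zero [DecidableEq V] (hω : ∀ e ∉ G.edgeSet, ω e = 0) :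
    IsStress G D ω ↔ ∑ e, ω e • edgeRow D e = 0 := by
  have hloop (x : V) : ω s(x, x) = 0 := hω _ (G.loopless.irrefl x)
  simp only [funext_iff, sum_smul_edgeRow_apply D hloop]
  exact ⟨fun h => h.equilibrium, fun h => ⟨hω, h⟩⟩

theorem isIndependent_iff_forall_isStress [DecidableEq V] :
    IsIndependent G D ↔ ∀ ω, IsStress G D ω → ω = 0 := by
  classical
  rw [IsIndependent, Fintype.linearIndependent_iff]
  have hsum {ω : Sym2 V → ℝ} (hω : ∀ e ∉ G.edgeSet, ω e = 0) :
      ∑ e : G.edgeSet, ω e • edgeRow D e = ∑ e, ω e • edgeRow D e :=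
    Fintype.sum_of_injective _ Subtype.val_injective _ _
      (fun e he => by simp [hω e (by simpa using he)]) fun _ => rfl
  constructor
  · intro h ω hω
    have hzero := h (fun e => ω e) <| (hsum hω.eq_zero_of_notMem).trans <|
      (isStress_iff_sum_smul_edgeRow_eq_zero hω.eq_zero_of_notMem).1 hω
    ext e
    by_cases he : e ∈ G.edgeSet
    · exact hzero ⟨e, he⟩
    · exact hω.eq_zero_of_notMem e he
  · intro h c hc e
    let ω (e : Sym2 V) : ℝ := if he : e ∈ G.edgeSet then c ⟨e, he⟩ else 0
    have hωc (e : G.edgeSet) : ω e = c e := dif_pos e.2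
    have hω (e) (he : e ∉ G.edgeSet) : ω e = 0 := dif_neg he
    rw [← hωc, h ω ((isStress_iff_sum_smul_edgeRow_eq_zero hω).2 ?_), Pi.zero_apply]
    simpa only [← hsum hω, hωc] using hc

variable [DecidableEq W] {D' : W → W → E} {f : V → W} {u v : V}

/-- The push-forward of a stress along a map of vertices: the weights of all edges between two
fibres are added up, and edges inside a fibre are discarded. -/
noncomputable def stressMap (f : V → W) (ω : Sym2 V → ℝ) : Sym2 W → ℝ :=
  Sym2.lift ⟨fun a b => if a = b then 0 else ∑ x with f x = a, ∑ y with f y = b, ω s(x, y),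
    fun a b => by
      dsimp only
      rw [Finset.sum_comm]
      simp only [eq_comm (a := a), Sym2.eq_swap]⟩

theorem stressMap_apply_self (f : V → W) (ω : Sym2 V → ℝ) (a : W) : stressMap f ω s(a, a) = 0 :=
  if_pos rfl

theorem stressMap_apply_of_ne (f : V → W) (ω : Sym2 V → ℝ) {a b : W} (hab : a ≠ b) :
    stressMap f ω s(a, b) = ∑ x with f x = a, ∑ y with f y = b, ω s(x, y) :=
  if_neg hab

theorem sum_stressMap_smul [Fintype W] (hf : ∀ x y, f x ≠ f y → D x y = D' (f x) (f y))
    (ω : Sym2 V → ℝ) (a : W) :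
    ∑ b, stressMap f ω s(a, b) • D' a b =
      ∑ x with f x = a, ∑ y with f y ≠ a, ω s(x, y) • D x y := by
  rw [Finset.sum_comm, Finset.sum_filter, ← Finset.sum_fiberwise Finset.univ f]
  refine Finset.sum_congr rfl fun b _ => ?_
  obtain rfl | hab := eq_or_ne a b
  · rw [stressMap_apply_self, zero_smul]
    exact (Finset.sum_eq_zero fun y hy => if_neg (not_not.2 (Finset.mem_filter.1 hy).2)).symm
  rw [stressMap_apply_of_ne f ω hab, Finset.sum_comm, Finset.sum_smul]
  refine Finset.sum_congr rfl fun y hy => ?_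
  obtain rfl := (Finset.mem_filter.1 hy).2
  rw [if_pos hab.symm, Finset.sum_smul]
  refine Finset.sum_congr rfl fun x hx => ?_
  obtain rfl := (Finset.mem_filter.1 hx).2
  rw [hf x y hab]

theorem IsStress.map [Fintype W] (hD : ∀ x y, D x y = -D y x)
    (hf : ∀ x y, f x ≠ f y → D x y = D' (f x) (f y)) (hω : IsStress G D ω) :
    IsStress (G.map f) D' (stressMap f ω) where
  eq_zero_of_notMem e he := by
    induction e with | _ a b
    obtain rfl | hab := eq_or_ne a b
    · exact stressMap_apply_self f ω a
    rw [stressMap_apply_of_ne f ω hab]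
    refine Finset.sum_eq_zero fun x hx => Finset.sum_eq_zero fun y hy => ?_
    refine hω.eq_zero_of_not_adj fun hxy => he ?_
    exact ⟨hab, x, y, hxy, (Finset.mem_filter.1 hx).2, (Finset.mem_filter.1 hy).2⟩
  equilibrium a :=
    calc ∑ b, stressMap f ω s(a, b) • D' a b
        = ∑ x with f x = a, ∑ y with f y ≠ a, ω s(x, y) • D x y := sum_stressMap_smul hf ω a
      _ = ∑ x with f x = a, ∑ y with f y = a, ω s(x, y) • D x y +
            ∑ x with f x = a, ∑ y with f y ≠ a, ω s(x, y) • D x y := by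
          rw [sum_sum_smul_eq_zero_of_antisymm hD, zero_add]
      _ = ∑ x with f x = a, ∑ y, ω s(x, y) • D x y := by
          rw [← Finset.sum_add_distrib]
          exact Finset.sum_congr rfl fun x _ => Finset.sum_filter_add_sum_filter_not _ _ _
      _ = 0 := Finset.sum_eq_zero fun x _ => hω.equilibrium x

theorem IsContraction.filter_map_eq_left [DecidableEq V] (hf : IsContraction f u v) :
    ({x | f x = f u} : Finset V) = {u, v} := by
  ext x
  have := hf.eq_of_map_eq x u
  grind [hf.map_eq]

theorem IsContraction.filter_map_eq_of_ne (hf : IsContraction f u v) {y : V} (hu : y ≠ u)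
    (hv : y ≠ v) : ({x | f x = f y} : Finset V) = {y} := by
  ext x
  have := hf.eq_of_map_eq x y
  grind

theorem stressMap_apply_contracted (hf : IsContraction f u v) (ω : Sym2 V → ℝ) {y : V}
    (hu : y ≠ u) (hv : y ≠ v) : stressMap f ω s(f u, f y) = ω s(u, y) + ω s(v, y) := by
  classical
  rw [stressMap_apply_of_ne f ω (hf.map_left_ne hu hv), hf.filter_map_eq_left,
    hf.filter_map_eq_of_ne hu hv]
  simp [hf.ne]

theorem stressMap_apply_of_ne_of_ne (hf : IsContraction f u v) (ω : Sym2 V → ℝ) {x y : V}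
    (hxu : x ≠ u) (hxv : x ≠ v) (hyu : y ≠ u) (hyv : y ≠ v) (hxy : x ≠ y) :
    stressMap f ω s(f x, f y) = ω s(x, y) := by
  have hne : f x ≠ f y := fun h => by have := hf.eq_of_map_eq x y h; grind
  simp [stressMap_apply_of_ne f ω hne, hf.filter_map_eq_of_ne hxu hxv,
    hf.filter_map_eq_of_ne hyu hyv]

theorem IsStress.eq_zero_of_stressMap_eq_zero (hf : IsContraction f u v) (hω : IsStress G D ω)
    (hmap : stressMap f ω = 0) (hu : ∀ y, ω s(u, y) = 0) : ω = 0 := by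
  have hv (y : V) : ω s(v, y) = 0 := by
    obtain rfl | hyu := eq_or_ne y u
    · rw [Sym2.eq_swap, hu]
    obtain rfl | hyv := eq_or_ne y v
    · exact hω.eq_zero_of_not_adj (G.loopless.irrefl y)
    have := stressMap_apply_contracted hf ω hyu hyv
    rwa [hmap, hu, zero_add, eq_comm] at this
  ext e
  induction e with | _ x y
  by_cases h : x = u ∨ x = v ∨ y = u ∨ y = v ∨ x = y
  · obtain rfl | rfl | rfl | rfl | rfl := h
    · exact hu y
    · exact hv y
    · rw [Sym2.eq_swap]
      exact hu x
    · rw [Sym2.eq_swap]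
      exact hv x
    · exact hω.eq_zero_of_not_adj (G.loopless.irrefl x)
  · push Not at h
    rw [← stressMap_apply_of_ne_of_ne hf ω h.1 h.2.1 h.2.2.1 h.2.2.2.1 h.2.2.2.2, hmap]
    rfl

end Stress

theorem IsIndependent.of_contraction {V W E : Type*} [Finite V] [DecidableEq V] [Finite W]
    [DecidableEq W] [AddCommGroup E] [Module ℝ E] {G : SimpleGraph V} {D : V → V → E}
    {D' : W → W → E} {f : V → W} {u v : V} (hf : IsContraction f u v)
    (hD : ∀ x y, D x y = -D y x) (hDf : ∀ x y, f x ≠ f y → D x y = D' (f x) (f y))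
    (hu : LinearIndepOn ℝ (D u) (insert v (G.commonNeighbors u v)))
    (hG : IsIndependent (G.map f) D') : IsIndependent G D := by
  classical
  have := Fintype.ofFinite V
  have := Fintype.ofFinite W
  refine isIndependent_iff_forall_isStress.2 fun ω hω => ?_
  have hmap : stressMap f ω = 0 := isIndependent_iff_forall_isStress.1 hG _ (hω.map hD hDf)
  refine hω.eq_zero_of_stressMap_eq_zero hf hmap ?_
  have hsupp (y : V) (hy : ω s(u, y) ≠ 0) : y ∈ insert v (G.commonNeighbors u v) := by
    have huy : G.Adj u y := not_not.1 fun h => hy (hω.eq_zero_of_not_adj h)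
    refine or_iff_not_imp_left.2 fun hyv => ⟨huy, not_not.1 fun hvy => hy ?_⟩
    have := stressMap_apply_contracted hf ω huy.ne' hyv
    rwa [hmap, hω.eq_zero_of_not_adj hvy, add_zero, eq_comm] at this
  have hsum : ∑ y with ω s(u, y) ≠ 0, ω s(u, y) • D u y = 0 := by
    rw [← hω.equilibrium u]
    exact Finset.sum_filter_of_ne fun y _ h => left_ne_zero_of_smul h
  intro y
  by_contra hy
  exact hy (linearIndepOn_iff'.1 hu _ _ (fun y hy => hsupp y (by simpa using hy)) hsum y
    (by simpa using hy))

/-! ### Slopes of the moment curve -/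

section MomentCurve

variable {d : ℕ}

/-- The moment curve `a ↦ (a, a², …, aᵈ)`. -/
def momentCurve (d : ℕ) (a : ℝ) : Fin d → ℝ := fun j => a ^ ((j : ℕ) + 1)

/-- The divided difference of the moment curve at `a` and `b`: the chord from `b` to `a` divided by
`a - b`, extended to `a = b` by the tangent vector. -/
def momentSlope (d : ℕ) (a b : ℝ) : Fin d → ℝ :=
  fun j => ∑ k ∈ Finset.range (j + 1), a ^ k * b ^ ((j : ℕ) - k)

theorem momentSlope_comm (a b : ℝ) : momentSlope d a b = momentSlope d b a :=
  funext fun j => geom_sum₂_comm a b ((j : ℕ) + 1)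

theorem sub_smul_momentSlope (a b : ℝ) :
    (a - b) • momentSlope d a b = momentCurve d a - momentCurve d b :=
  funext fun j => (Commute.all a b).mul_geom_sum₂ ((j : ℕ) + 1)

-- The recursion `hⱼ(b, a) = bʲ + a * hⱼ₋₁(b, a)` turns a dependency among the slopes into one
-- among the rows `(1, b, …, bᵈ⁻¹)` of a Vandermonde matrix.
theorem linearIndependent_momentSlope {ι : Type*} [Fintype ι] (hd : Fintype.card ι ≤ d) (a : ℝ)
    {x : ι → ℝ} (hx : Injective x) : LinearIndependent ℝ fun i => momentSlope d a (x i) := by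
  refine Fintype.linearIndependent_iff.2 fun c hc => ?_
  have hslope : ∀ m ≤ d, ∑ i, c i * ∑ k ∈ Finset.range m, x i ^ k * a ^ (m - 1 - k) = 0
    | 0, _ => by simp
    | m + 1, hm => by
      simpa [momentSlope_comm a, momentSlope] using congrFun hc ⟨m, hm⟩
  have hvandermonde : LinearIndependent ℝ fun i (j : Fin d) => x i ^ (j : ℕ) :=
    linearIndependent_pow_of_injective hd hx
  refine Fintype.linearIndependent_iff.1 hvandermonde c ?_
  ext j
  calc (∑ i, c i • fun j : Fin d => x i ^ (j : ℕ)) j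
      = ∑ i, c i * ∑ k ∈ Finset.range (j + 1), x i ^ k * a ^ ((j : ℕ) - k) -
          a * ∑ i, c i * ∑ k ∈ Finset.range j, x i ^ k * a ^ ((j : ℕ) - 1 - k) := by
        rw [Finset.mul_sum, ← Finset.sum_sub_distrib, Finset.sum_apply]
        refine Finset.sum_congr rfl fun i _ => ?_
        rw [geom_sum₂_succ_eq, Pi.smul_apply, smul_eq_mul]
        ring
    _ = 0 := by
        rw [hslope j j.is_lt.le, mul_zero, sub_zero]
        exact hslope (j + 1) j.is_lt

end MomentCurve

section SignedSlope

variable {V W : Type*} [LinearOrder V] [LinearOrder W] {d : ℕ}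

/-- The sign of `y - x` in a linear order. -/
def orderSign (x y : V) : ℝ := if x < y then 1 else if y < x then -1 else 0

theorem orderSign_swap (x y : V) : orderSign y x = -orderSign x y := by
  grind [orderSign]

theorem orderSign_ne_zero {x y : V} (hxy : x ≠ y) : orderSign x y ≠ 0 := by
  grind [orderSign]

theorem orderSign_map {f : V → W} (hf : Monotone f) {x y : V} (hxy : f x ≠ f y) :
    orderSign (f x) (f y) = orderSign x y := by
  obtain h | h := hxy.lt_or_gt
  · rw [orderSign, if_pos h, orderSign, if_pos (hf.reflect_lt h)]
  · rw [orderSign, if_neg h.not_gt, if_pos h, orderSign, if_neg (hf.reflect_lt h).not_gt,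
      if_pos (hf.reflect_lt h)]

/-- The direction of the edge `xy` for points on the moment curve with parameters `t`. For `x < y`
and `t x ≠ t y` it is the chord divided by `t x - t y`; it remains nonzero if `t x = t y`. -/
def signedSlope (d : ℕ) (t : V → ℝ) (x y : V) : Fin d → ℝ :=
  orderSign x y • momentSlope d (t x) (t y)

theorem signedSlope_swap (t : V → ℝ) (x y : V) : signedSlope d t x y = -signedSlope d t y x := by
  rw [signedSlope, signedSlope, momentSlope_comm, orderSign_swap, neg_smul]

theorem signedSlope_comp {f : V → W} (hf : Monotone f) (t : W → ℝ) {x y : V} (hxy : f x ≠ f y) :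
    signedSlope d (t ∘ f) x y = signedSlope d t (f x) (f y) := by
  rw [signedSlope, signedSlope, orderSign_map hf hxy, comp_apply, comp_apply]

theorem continuous_signedSlope (x y : V) :
    Continuous fun t : V → ℝ => signedSlope d t x y := by
  unfold signedSlope momentSlope
  fun_prop

theorem linearIndepOn_signedSlope {t : V → ℝ} {u : V} {s : Set V} (hs : s.Finite)
    (hcard : s.ncard ≤ d) (hu : u ∉ s) (ht : InjOn t s) :
    LinearIndepOn ℝ (signedSlope d t u) s := by
  have := hs.fintype
  refine linearIndependent_smul_of_ne_zero
    (linearIndependent_momentSlope ?_ (t u) (injOn_iff_injective.1 ht)) fun y =>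
      orderSign_ne_zero fun h => hu (h ▸ y.2)
  rwa [← Nat.card_eq_fintype_card, Nat.card_coe_set_eq]

end SignedSlope

/-! ### Graphs without three pairwise crossing edges -/

section ThreeCrossingFree

variable {V W : Type*} [LinearOrder V] [LinearOrder W] {G : SimpleGraph V}

/-- A graph on a linearly ordered vertex set, drawn with its vertices in convex position, that has
no three pairwise crossing edges. -/
def IsThreeCrossingFree (G : SimpleGraph V) : Prop :=
  ∀ ⦃a b c a' b' c' : V⦄, a < b → b < c → c < a' → a' < b' → b' < c' →
    G.Adj a a' → G.Adj b b' → ¬G.Adj c c'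

theorem IsThreeCrossingFree.map (hG : IsThreeCrossingFree G) {f : V → W} (hf : Monotone f) :
    IsThreeCrossingFree (G.map f) := by
  rintro _ _ _ _ _ _ hab hbc hca hab' hbc' ⟨-, a, a', ha, rfl, rfl⟩ ⟨-, b, b', hb, rfl, rfl⟩
    ⟨-, c, c', hc, rfl, rfl⟩
  exact hG (hf.reflect_lt hab) (hf.reflect_lt hbc) (hf.reflect_lt hca) (hf.reflect_lt hab')
    (hf.reflect_lt hbc') ha hb hc

theorem IsThreeCrossingFree.subsingleton_commonNeighbors_outside (hG : IsThreeCrossingFree G)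
    {i j k l : V} (hij : i < j) (hjk : j < k) (hkl : k < l) (hil : G.Adj i l) :
    {y ∈ G.commonNeighbors j k | y < i ∨ l < y}.Subsingleton := by
  suffices h : ∀ y ∈ G.commonNeighbors j k, ∀ z ∈ G.commonNeighbors j k,
      y < i ∨ l < y → z < i ∨ l < z → ¬y < z from fun y hy z hz =>
    le_antisymm (not_lt.1 (h z hz.1 y hy.1 hz.2 hy.2)) (not_lt.1 (h y hy.1 z hz.1 hy.2 hz.2))
  rintro y ⟨hjy, hky⟩ z ⟨hjz, hkz⟩ (hyi | hly) (hzi | hlz) hyz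
  · exact hG hyz hzi hij hjk hkl hjy.symm hkz.symm hil
  · exact hG hyi hij hjk hkl hlz hky.symm hil hjz
  · exact (hly.trans hyz).not_gt (hzi.trans (hij.trans (hjk.trans hkl)))
  · exact hG hij hjk hkl hly hyz hil hjy hkz

theorem IsThreeCrossingFree.ncard_commonNeighbors_le {n : ℕ} {G : SimpleGraph (Fin n)}
    (hG : IsThreeCrossingFree G) {i j k l : Fin n} (hij : (i : ℕ) + 1 = j) (hjk : (j : ℕ) + 1 = k)
    (hkl : k < l) (hil : G.Adj i l)
    (hmin : ∀ a b : Fin n, G.Adj a b → (a : ℕ) + 3 ≤ b → (l : ℕ) - i ≤ b - a) :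
    (G.commonNeighbors j k).ncard ≤ 3 := by
  let m : Fin n := ⟨k + 1, by lia⟩
  have hsubset : G.commonNeighbors j k ⊆
      {i, m} ∪ {y ∈ G.commonNeighbors j k | y < i ∨ l < y} := by
    intro y hy
    by_cases hyj : (j : ℕ) + 3 ≤ y
    · have := hmin j y hy.1 hyj
      exact .inr ⟨hy, .inr (by lia)⟩
    have hyj' : j ≠ y := hy.1.ne
    have hyk : k ≠ y := hy.2.ne
    by_cases hyi : y < i
    · exact .inr ⟨hy, .inl hyi⟩
    refine .inl ?_
    simp only [mem_insert_iff, mem_singleton_iff, Fin.ext_iff, m]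
    lia
  have hout : {y ∈ G.commonNeighbors j k | y < i ∨ l < y}.ncard ≤ 1 :=
    ncard_le_one_iff_subsingleton.2
      (hG.subsingleton_commonNeighbors_outside (by lia) (by lia) hkl hil)
  calc (G.commonNeighbors j k).ncard
      ≤ ({i, m} ∪ {y ∈ G.commonNeighbors j k | y < i ∨ l < y}).ncard := ncard_le_ncard hsubset
    _ ≤ ({i, m} : Set (Fin n)).ncard + {y ∈ G.commonNeighbors j k | y < i ∨ l < y}.ncard :=
        ncard_union_le _ _
    _ ≤ 2 + 1 := add_le_add ((ncard_insert_le i {m}).trans (by simp)) hout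

-- If some edge `il` has length at least three, a shortest such edge works with `i + 1, i + 2`.
theorem IsThreeCrossingFree.exists_ncard_commonNeighbors_le {n : ℕ}
    {G : SimpleGraph (Fin (n + 2))} (hG : IsThreeCrossingFree G) :
    ∃ i : Fin (n + 1), (G.commonNeighbors i.castSucc i.succ).ncard ≤ 3 := by
  let long : Set (Fin (n + 2) × Fin (n + 2)) := {e | G.Adj e.1 e.2 ∧ (e.1 : ℕ) + 3 ≤ e.2}
  obtain hlong | hlong := long.eq_empty_or_nonempty
  · refine ⟨0, (ncard_le_one_iff_subsingleton.2 ?_).trans (by norm_num)⟩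
    have hval (y) (hy : y ∈ G.commonNeighbors (0 : Fin (n + 1)).castSucc (0 : Fin (n + 1)).succ) :
        (y : ℕ) = 2 := by
      have hshort : ¬3 ≤ (y : ℕ) := fun h =>
        eq_empty_iff_forall_notMem.1 hlong (0, y) ⟨hy.1, by simpa using h⟩
      have h0 := Fin.val_ne_of_ne hy.1.ne'
      have h1 := Fin.val_ne_of_ne hy.2.ne'
      simp only [Fin.val_castSucc, Fin.val_succ, Fin.val_zero] at h0 h1
      lia
    exact fun y hy z hz => Fin.ext ((hval y hy).trans (hval z hz).symm)
  · obtain ⟨⟨i, l⟩, ⟨hil, hle⟩, hmin⟩ :=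
      exists_min_image long (fun e => (e.2 : ℕ) - e.1) long.toFinite hlong
    refine ⟨⟨i + 1, by lia⟩, hG.ncard_commonNeighbors_le (i := i) rfl rfl hle hil
      fun a b hab hle => hmin (a, b) ⟨hab, hle⟩⟩

end ThreeCrossingFree

/-! ### Independence along the moment curve -/

section MomentIndependence

variable {n d : ℕ}

theorem isContraction_predAbove (i : Fin n) : IsContraction i.predAbove i.castSucc i.succ where
  ne := i.castSucc_lt_succ.ne
  map_eq := by simp
  eq_of_map_eq x y h := by
    grind [Fin.predAbove, Fin.coe_castPred]

theorem isOpen_setOfPred_isIndependent_signedSlope {V : Type*} [Finite V] [LinearOrder V]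
    (G : SimpleGraph V) (d : ℕ) : IsOpen {t : V → ℝ | IsIndependent G (signedSlope d t)} := by
  have := Fintype.ofFinite V
  refine isOpen_setOfPred_linearIndependent_of_continuous (continuous_pi fun ⟨e, _⟩ => ?_)
  induction e with | _ x y
  exact ((continuous_single x).comp (continuous_signedSlope x y)).add
    ((continuous_single y).comp (continuous_signedSlope y x))

theorem exists_injective_isIndependent_of_contraction {G : SimpleGraph (Fin (n + 1))} {i : Fin n}
    (hi : (G.commonNeighbors i.castSucc i.succ).ncard < d)
    (h : ∃ t : Fin n → ℝ, Injective t ∧ IsIndependent (G.map i.predAbove) (signedSlope d t)) :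
    ∃ t : Fin (n + 1) → ℝ, Injective t ∧ IsIndependent G (signedSlope d t) := by
  obtain ⟨t, ht, hind⟩ := h
  have hf := isContraction_predAbove i
  have hsplit : IsIndependent G (signedSlope d (t ∘ i.predAbove)) := by
    have hsub : insert i.succ (G.commonNeighbors i.castSucc i.succ) ⊆ {i.castSucc}ᶜ :=
      insert_subset hf.ne.symm fun y hy => hy.1.ne'
    exact .of_contraction hf (signedSlope_swap _)
      (fun x y => signedSlope_comp (Fin.predAbove_right_monotone i) t)
      (linearIndepOn_signedSlope (toFinite _) ((ncard_insert_le _ _).trans hi)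
        (fun h => hsub h rfl) (ht.injOn.comp (hf.injOn_compl_left.mono hsub) (mapsTo_univ _ _)))
      hind
  obtain ⟨s, hs, hinj⟩ := dense_setOfPred_injective.exists_mem_open
    (isOpen_setOfPred_isIndependent_signedSlope G d) ⟨_, hsplit⟩
  exact ⟨s, hs, hinj⟩

theorem isIndependent_of_subsingleton {V E : Type*} [DecidableEq V] [Subsingleton V]
    [AddCommGroup E] [Module ℝ E] (G : SimpleGraph V) (D : V → V → E) : IsIndependent G D := by
  have : IsEmpty G.edgeSet := by
    rw [Subsingleton.elim G ⊥, SimpleGraph.edgeSet_bot]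
    infer_instance
  exact linearIndependent_empty_type

theorem IsThreeCrossingFree.exists_injective_isIndependent {G : SimpleGraph (Fin n)}
    (hG : IsThreeCrossingFree G) :
    ∃ t : Fin n → ℝ, Injective t ∧ IsIndependent G (signedSlope 4 t) := by
  obtain _ | n := n
  · exact ⟨0, injective_of_subsingleton _, isIndependent_of_subsingleton _ _⟩
  induction n with
  | zero =>
    have : Subsingleton (Fin (0 + 1)) := Fin.subsingleton_one
    exact ⟨0, injective_of_subsingleton _, isIndependent_of_subsingleton _ _⟩
  | succ n ih =>
    obtain ⟨i, hi⟩ := hG.exists_ncard_commonNeighbors_le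
    exact exists_injective_isIndependent_of_contraction (Nat.lt_succ_of_le hi)
      (ih (hG.map (Fin.predAbove_right_monotone i)))

end MomentIndependence

section Pairs

variable {n d : ℕ}

/-- The graph whose edges are the given pairs. -/
def pairGraph (S : Set (Pair n)) : SimpleGraph (Fin n) :=
  SimpleGraph.fromRel fun x y => ∃ h : x < y, ⟨(x, y), h⟩ ∈ S

theorem pairGraph_adj_of_lt {S : Set (Pair n)} {x y : Fin n} (hxy : x < y) :
    (pairGraph S).Adj x y ↔ ⟨(x, y), hxy⟩ ∈ S := by
  simp [pairGraph, hxy, hxy.ne, hxy.not_gt]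

theorem isThreeCrossingFree_pairGraph {S : Set (Pair n)} (hS : CrossingFree n 2 S) :
    IsThreeCrossingFree (pairGraph S) := by
  intro a b c a' b' c' hab hbc hca hab' hbc' ha hb hc
  have haa' : a < a' := hab.trans (hbc.trans hca)
  have hbb' : b < b' := (hbc.trans hca).trans hab'
  have hcc' : c < c' := (hca.trans hab').trans hbc'
  rw [pairGraph_adj_of_lt haa'] at ha
  rw [pairGraph_adj_of_lt hbb'] at hb
  rw [pairGraph_adj_of_lt hcc'] at hc
  refine hS ⟨{⟨(a, a'), haa'⟩, ⟨(b, b'), hbb'⟩, ⟨(c, c'), hcc'⟩}, ?_, ?_, ?_⟩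
  · simp [insert_subset_iff, ha, hb, hc]
  · refine Finset.card_eq_three.2 ⟨_, _, _, ?_, ?_, ?_, rfl⟩ <;> grind
  · simp only [Cross]
    grind

theorem bjRow_momentCurve (t : Fin n → ℝ) (e : Pair n) :
    bjRow (fun i => momentCurve d (t i)) e = (t e.1.1 - t e.1.2) •
      uncurry (edgeRow (signedSlope d t) s(e.1.1, e.1.2)) := by
  obtain ⟨⟨x, y⟩, hxy⟩ := e
  have hslope : signedSlope d t x y = momentSlope d (t x) (t y) := by
    rw [signedSlope, orderSign, if_pos hxy, one_smul]
  have hchord (j : Fin d) := congrFun (sub_smul_momentSlope (t x) (t y)) j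
  simp only [Pi.smul_apply, Pi.sub_apply, smul_eq_mul] at hchord
  ext ⟨m, j⟩
  obtain rfl | hmx := eq_or_ne m x
  · simp [bjRow, edgeRow, hxy.ne, hslope, hchord]
  obtain rfl | hmy := eq_or_ne m y
  · simp [bjRow, edgeRow, hmx, signedSlope_swap t m x, hslope, hchord]
  · simp [bjRow, edgeRow, hmx, hmy]

theorem linearIndependent_bjRow_momentCurve {t : Fin n → ℝ} (ht : Injective t) {S : Set (Pair n)}
    (hS : IsIndependent (pairGraph S) (signedSlope d t)) :
    LinearIndependent ℝ fun e : S => bjRow (fun i => momentCurve d (t i)) e.1 := by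
  let edge (e : S) : (pairGraph S).edgeSet :=
    ⟨s(e.1.1.1, e.1.1.2), (pairGraph_adj_of_lt e.1.2).2 e.2⟩
  have hedge : Injective edge := by
    rintro ⟨⟨⟨x, y⟩, hxy⟩, _⟩ ⟨⟨⟨z, w⟩, hzw⟩, _⟩ h
    have := Sym2.eq_iff.1 (congrArg Subtype.val h)
    grind
  simp only [bjRow_momentCurve]
  exact linearIndependent_smul_of_ne_zero
    ((hS.comp edge hedge).map' (LinearEquiv.curry ℝ ℝ (Fin n) (Fin d)).symm.toLinearMap
      (LinearEquiv.ker _)) fun e => sub_ne_zero.2 (ht.ne e.1.2.ne)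

theorem analyticAt_bjRow_momentCurve (e : Pair n) (t : Fin n → ℝ) :
    AnalyticAt ℝ (fun t : Fin n → ℝ => bjRow (fun i => momentCurve d (t i)) e) t := by
  refine analyticAt_pi_iff.2 fun ⟨m, j⟩ => ?_
  have hcoord (i : Fin n) : AnalyticAt ℝ (fun t : Fin n → ℝ => momentCurve d (t i) j) t :=
    (analyticAt_eval i t).pow _
  simp only [bjRow]
  split_ifs
  · exact (hcoord _).sub (hcoord _)
  · exact (hcoord _).sub (hcoord _)
  · exact analyticAt_const

theorem isOpen_setOfPred_linearIndependent_bjRow_momentCurve (d : ℕ) (S : Set (Pair n)) :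
    IsOpen {t : Fin n → ℝ |
      LinearIndependent ℝ fun e : S => bjRow (fun i => momentCurve d (t i)) e.1} :=
  isOpen_setOfPred_linearIndependent_of_continuous <| continuous_pi fun e =>
    continuous_iff_continuousAt.2 fun t => (analyticAt_bjRow_momentCurve e.1 t).continuousAt

theorem dense_setOfPred_linearIndependent_bjRow_momentCurve {S : Set (Pair n)}
    (hS : CrossingFree n 2 S) :
    Dense {t : Fin n → ℝ |
      LinearIndependent ℝ fun e : S => bjRow (fun i => momentCurve 4 (t i)) e.1} := by
  obtain ⟨t, ht, hind⟩ := (isThreeCrossingFree_pairGraph hS).exists_injective_isIndependent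
  exact dense_setOfPred_linearIndependent_of_analyticOnNhd
    (fun e t _ => analyticAt_bjRow_momentCurve e.1 t)
    ⟨t, linearIndependent_bjRow_momentCurve ht hind⟩

theorem goodSet_eq_iInter (n : ℕ) :
    goodSet n = ⋂ T : {T : Set (Pair n) // IsTriangulation n 2 T}, {t |
      LinearIndependent ℝ fun e : T.1 => bjRow (fun i => momentCurve 4 (t i)) e.1} := by
  ext t
  rw [mem_iInter, Subtype.forall]
  rfl

end Pairs

/-- For `n ≥ 5`, 2-triangulations are isostatic for generic positions along the
moment curve in dimension 4: the set of good parameter tuples is open and dense in `ℝⁿ`. -/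
theorem stmt3 (n : ℕ) (hn : 5 ≤ n) : IsOpen (goodSet n) ∧ Dense (goodSet n) := by
  have hopen (T : {T : Set (Pair n) // IsTriangulation n 2 T}) :=
    isOpen_setOfPred_linearIndependent_bjRow_momentCurve 4 T.1
  rw [goodSet_eq_iInter]
  exact ⟨isOpen_iInter_of_finite hopen, dense_iInter_of_isOpen hopen fun T =>
    dense_setOfPred_linearIndependent_bjRow_momentCurve T.2.1⟩
end

section
/- Let q₁,…,q₉ ∈ ℝ² be points in convex position such that the three lines through q₁ and q₆, through q₃ and q₇, and through q₄ and q₉ have a common point (for instance q_i = (i, i²) for i = 1,…,9). Let E be the set of all pairs of {1,…,9} except {1,6}, {3,7}, {4,9}. Then E is a 3-triangulation of the 9-gon, and the rows of the cofactor rigidity matrix C₆(q₁,…,q₉) indexed by E form a circuit: they are linearly dependent, but the rows indexed by any proper subset of E are linearly independent. -/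
open scoped BigOperators

/-- The set of all pairs of `{1,…,9}` except `{1,6}`, `{3,7}`, `{4,9}` (0-indexed:
`(0,5)`, `(2,6)`, `(3,8)`). -/
def E5 : Set (Pair 9) :=
  {e | e.val ≠ ((0 : Fin 9), (5 : Fin 9)) ∧ e.val ≠ ((2 : Fin 9), (6 : Fin 9)) ∧
       e.val ≠ ((3 : Fin 9), (8 : Fin 9))}

/-!
For `n = d + 3` points in general position, the stresses of the complete graph in `C_d(q)` form a
three-dimensional space parametrized by vectors `P` of `ℝ³`: with homogeneous coordinates
`Q_i = (x_i, y_i, 1)`, the stress of `P` puts weight `det (P, Q_i, Q_j) / ∏ₖ det (Q_i, Q_j, Q_k)`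
on `{i, j}`.  At each vertex the equilibrium condition is Lagrange's partial fraction identity for
binary forms, and a stress vanishing on a triangle vanishes identically because a dependency
between `d + 2` points of the rational normal curve of degree `d - 1` is determined by two of its
coefficients.

The weight on `{i, j}` vanishes exactly when `P` lies on the line `q_i q_j`.  Hence, if two
non-parallel lines spanned by the points meet in `p`, the stresses supported on the pairs whose
line misses `p` are the multiples of the stress of `p`, which vanishes on no such pair.  In convex
position a line `q_i q_j` through the common point of the three given diagonals has to cross each
of them or coincide with it, and no pair of `E` crosses all three.
-/

open Finset Matrix

lemma linearIndepOn_iff_forall_sum_eq_zero {ι R M : Type*} [Fintype ι] [Ring R]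
    [AddCommGroup M] [Module R M] {v : ι → M} {s : Set ι} :
    LinearIndepOn R v s ↔
      ∀ c : ι → R, (∀ i ∉ s, c i = 0) → ∑ i, c i • v i = 0 → c = 0 := by
  rw [linearIndepOn_iff, (Finsupp.equivFunOnFinite (M := R)).forall_congr_left]
  simp [Finsupp.mem_supported', Finsupp.linearCombination_apply, Finsupp.sum_fintype,
    Finsupp.ext_iff, funext_iff]

lemma exists_fin_lt_lt {n : ℕ} (hn : 3 ≤ n) : ∃ x y z : Fin n, x < y ∧ y < z :=
  ⟨⟨0, by omega⟩, ⟨1, by omega⟩, ⟨2, by omega⟩, by simp, by simp⟩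

section Orientation

/-- The bracket `[a, b, c]`: twice the signed area of the triangle `a b c`. -/
def orient (a b c : ℝ × ℝ) : ℝ := det2 (b - a) (c - a)

lemma onLine_iff_orient_eq_zero {a b p : ℝ × ℝ} : onLine a b p ↔ orient a b p = 0 := Iff.rfl

lemma det2_sub_sub (a b c : ℝ × ℝ) : det2 (a - b) (a - c) = orient a b c := by
  simp only [orient, det2, Prod.fst_sub, Prod.snd_sub]; ring

lemma orient_swap_left (a b c : ℝ × ℝ) : orient b a c = -orient a b c := by
  simp only [orient, det2, Prod.fst_sub, Prod.snd_sub]; ring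

lemma orient_swap_right (a b c : ℝ × ℝ) : orient a c b = -orient a b c := by
  simp only [orient, det2, Prod.fst_sub, Prod.snd_sub]; ring

lemma orient_rotate (a b c : ℝ × ℝ) : orient b c a = orient a b c := by
  simp only [orient, det2, Prod.fst_sub, Prod.snd_sub]; ring

lemma orient_self_left (a b : ℝ × ℝ) : orient a b a = 0 := by
  simp [orient, det2]

lemma orient_self_right (a b : ℝ × ℝ) : orient a b b = 0 := by
  simp only [orient, det2]; ring

lemma orient_eq_add_add (a b c p : ℝ × ℝ) :
    orient a b c = orient a b p + orient b c p + orient c a p := by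
  simp only [orient, det2, Prod.fst_sub, Prod.snd_sub]; ring

lemma det2_sub_sub_eq_orient_sub (a b c d : ℝ × ℝ) :
    det2 (b - a) (d - c) = orient a b d - orient a b c := by
  simp only [orient, det2, Prod.fst_sub, Prod.snd_sub]; ring

lemma mem_openSegment_of_onLine {a b c d p : ℝ × ℝ}
    (hsep : orient c d a * orient c d b < 0) (hab : onLine a b p) (hcd : onLine c d p) :
    p ∈ openSegment ℝ a b := by
  set A := orient c d a with hA
  set B := orient c d b with hB
  have hAB : A - B ≠ 0 := fun h => by
    rw [sub_eq_zero.1 h] at hsep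
    exact (mul_self_nonneg B).not_gt hsep
  have hpos : 0 < -B / (A - B) ∧ 0 < A / (A - B) := by
    rw [div_pos_iff, div_pos_iff]
    rcases mul_neg_iff.1 hsep with ⟨h₁, h₂⟩ | ⟨h₁, h₂⟩
    · exact ⟨.inl ⟨by linarith, by linarith⟩, .inl ⟨h₁, by linarith⟩⟩
    · exact ⟨.inr ⟨by linarith, by linarith⟩, .inr ⟨h₁, by linarith⟩⟩
  rw [onLine, det2, Prod.fst_sub, Prod.snd_sub, Prod.fst_sub, Prod.snd_sub] at hab hcd
  refine ⟨-B / (A - B), A / (A - B), hpos.1, hpos.2, by field_simp; ring, ?_⟩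
  ext
  · simp only [Prod.fst_add, Prod.smul_fst, smul_eq_mul]
    field_simp
    simp only [hA, hB, orient, det2, Prod.fst_sub, Prod.snd_sub]
    linear_combination (b.1 - a.1) * hcd - (d.1 - c.1) * hab
  · simp only [Prod.snd_add, Prod.smul_snd, smul_eq_mul]
    field_simp
    simp only [hA, hB, orient, det2, Prod.fst_sub, Prod.snd_sub]
    linear_combination (b.2 - a.2) * hcd - (d.2 - c.2) * hab

lemma not_onLine_of_mem_openSegment {a b c d p : ℝ × ℝ} (hp : p ∈ openSegment ℝ a b)
    (hside : 0 ≤ orient c d a * orient c d b) (hne : orient c d a ≠ 0 ∨ orient c d b ≠ 0) :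
    ¬ onLine c d p := by
  obtain ⟨s, t, hs, ht, hst, rfl⟩ := hp
  have hcomb : orient c d (s • a + t • b) = s * orient c d a + t * orient c d b := by
    obtain rfl : s = 1 - t := by linarith
    simp only [orient, det2, Prod.fst_sub, Prod.snd_sub, Prod.fst_add, Prod.snd_add,
      Prod.smul_fst, Prod.smul_snd, smul_eq_mul]
    ring
  rw [onLine_iff_orient_eq_zero, hcomb]
  intro h
  have hA : orient c d a = 0 :=
    (sq_nonpos_iff _).1 (by nlinarith [congrArg (orient c d a * ·) h, mul_nonneg ht.le hside])
  have hB : orient c d b = 0 := by simpa [hA, ht.ne'] using h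
  exact hne.elim (· hA) (· hB)

end Orientation

section HomogeneousCoordinates

/-- Homogeneous coordinates `(x, y, 1)` of a point of the plane. -/
def homCoord (a : ℝ × ℝ) : Fin 3 → ℝ := ![a.1, a.2, 1]

/-- The determinant of `P ∈ ℝ³` and the homogeneous coordinates of `a` and `b`.  It vanishes when
the projective point `P` lies on the line through `a` and `b`. -/
def homOrient (P : Fin 3 → ℝ) (a b : ℝ × ℝ) : ℝ := P ⬝ᵥ homCoord a ⨯₃ homCoord b

lemma homOrient_eq (P : Fin 3 → ℝ) (a b : ℝ × ℝ) :
    homOrient P a b = P 0 * (a.2 - b.2) + P 1 * (b.1 - a.1) + P 2 * (a.1 * b.2 - a.2 * b.1) := by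
  rw [homOrient, cross_apply, vec3_dotProduct]
  simp [homCoord]

lemma homOrient_swap (P : Fin 3 → ℝ) (a b : ℝ × ℝ) : homOrient P b a = -homOrient P a b := by
  simp only [homOrient_eq]; ring

lemma homOrient_smul (t : ℝ) (P : Fin 3 → ℝ) (a b : ℝ × ℝ) :
    homOrient (t • P) a b = t * homOrient P a b :=
  smul_dotProduct t P _

lemma homOrient_homCoord (p a b : ℝ × ℝ) : homOrient (homCoord p) a b = orient a b p := by
  simp only [homOrient_eq, homCoord, Matrix.cons_val, orient, det2, Prod.fst_sub, Prod.snd_sub]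
  ring

lemma homOrient_eq_det2 (P : Fin 3 → ℝ) (a b : ℝ × ℝ) :
    homOrient P a b = det2 (a - b) (P 2 • a - (P 0, P 1)) := by
  simp only [homOrient_eq, det2, Prod.fst_sub, Prod.snd_sub, Prod.smul_fst, Prod.smul_snd,
    smul_eq_mul]
  ring

lemma exists_homOrient_eq {a b c : ℝ × ℝ} (h : orient a b c ≠ 0) (α β γ : ℝ) :
    ∃ P, homOrient P a b = α ∧ homOrient P a c = β ∧ homOrient P b c = γ := by
  refine ⟨(orient a b c)⁻¹ • (α • homCoord c - β • homCoord b + γ • homCoord a), ?_, ?_, ?_⟩ <;>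
  · rw [homOrient_smul, inv_mul_eq_iff_eq_mul₀ h]
    simp only [homOrient_eq, homCoord, Pi.add_apply, Pi.sub_apply, Pi.smul_apply, smul_eq_mul,
      Matrix.cons_val, orient, det2, Prod.fst_sub, Prod.snd_sub]
    ring

lemma eq_smul_homCoord_of_onLine {P : Fin 3 → ℝ} {a b c d p : ℝ × ℝ}
    (hdet : det2 (b - a) (d - c) ≠ 0) (hab : onLine a b p) (hcd : onLine c d p)
    (hPab : homOrient P a b = 0) (hPcd : homOrient P c d = 0) : P = P 2 • homCoord p := by
  simp only [onLine, det2, Prod.fst_sub, Prod.snd_sub] at hdet hab hcd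
  rw [homOrient_eq] at hPab hPcd
  have h₀ : P 0 = P 2 * p.1 := mul_left_cancel₀ hdet <| by
    linear_combination (d.1 - c.1) * hPab - (b.1 - a.1) * hPcd + P 2 * (b.1 - a.1) * hcd -
      P 2 * (d.1 - c.1) * hab
  have h₁ : P 1 = P 2 * p.2 := mul_left_cancel₀ hdet <| by
    linear_combination (d.2 - c.2) * hPab - (b.2 - a.2) * hPcd + P 2 * (b.2 - a.2) * hcd -
      P 2 * (d.2 - c.2) * hab
  ext t
  fin_cases t <;> simp [homCoord, h₀, h₁]

end HomogeneousCoordinates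

section BinaryForms

lemma exists_det2_eq_add {a b : ℝ × ℝ} (h : det2 a b ≠ 0) (u : ℝ × ℝ) :
    ∃ α β : ℝ, ∀ x, det2 x u = α * det2 x a + β * det2 x b := by
  refine ⟨det2 u b / det2 a b, det2 a u / det2 a b, fun x => ?_⟩
  field_simp
  simp only [det2]; ring

variable {ι : Type*} {m : ℕ} {s : Finset ι} {v : ι → ℝ × ℝ} {w : ι → ℝ}

/-- The weights `w j` define a linear dependency between the evaluations at the vectors `v j`,
`j ∈ s`, of binary forms of degree `m`.  Forms are represented by products of `m` linear forms
`det2 · u`, which span. -/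
def AnnihilatesForms (m : ℕ) (s : Finset ι) (v : ι → ℝ × ℝ) (w : ι → ℝ) : Prop :=
  ∀ L : Multiset (ℝ × ℝ), L.card = m → ∑ j ∈ s, w j * (L.map (det2 (v j))).prod = 0

lemma sum_monomial_mul_prod_det2_eq_zero
    (h : ∀ k ≤ m, ∑ j ∈ s, w j * ((v j).1 ^ (m - k) * (v j).2 ^ k) = 0)
    (L : Multiset (ℝ × ℝ)) (k l : ℕ) (hkl : k + l + L.card = m) :
    ∑ j ∈ s, w j * ((v j).1 ^ k * (v j).2 ^ l * (L.map (det2 (v j))).prod) = 0 := by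
  induction L using Multiset.induction generalizing k l with
  | empty =>
    obtain rfl : k = m - l := by rw [Multiset.card_zero] at hkl; omega
    simpa using h l (by omega)
  | cons u L ih =>
    rw [Multiset.card_cons] at hkl
    have hexpand (j : ι) :
        w j * ((v j).1 ^ k * (v j).2 ^ l * ((u ::ₘ L).map (det2 (v j))).prod) =
          u.2 * (w j * ((v j).1 ^ (k + 1) * (v j).2 ^ l * (L.map (det2 (v j))).prod)) -
          u.1 * (w j * ((v j).1 ^ k * (v j).2 ^ (l + 1) * (L.map (det2 (v j))).prod)) := by
      rw [Multiset.map_cons, Multiset.prod_cons, det2]; ring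
    simp only [hexpand, sum_sub_distrib, ← mul_sum, ih (k + 1) l (by omega),
      ih k (l + 1) (by omega), mul_zero, sub_zero]

lemma annihilatesForms_iff_monomials : AnnihilatesForms m s v w ↔
    ∀ k ≤ m, ∑ j ∈ s, w j * ((v j).1 ^ (m - k) * (v j).2 ^ k) = 0 := by
  refine ⟨fun h k hk => ?_, fun h L hL => ?_⟩
  · simpa [det2] using h (.replicate (m - k) (0, 1) + .replicate k (-1, 0)) (by simp [hk])
  · simpa using sum_monomial_mul_prod_det2_eq_zero h L 0 0 (by simpa using hL)

lemma AnnihilatesForms.eq_zero (h : AnnihilatesForms m s v w)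
    (hs : (s : Set ι).Pairwise fun i j => det2 (v i) (v j) ≠ 0) (hcard : s.card = m + 3)
    {a b c : ι} (ha : a ∈ s) (hb : b ∈ s) (hc : c ∈ s) (hab : a ≠ b) (hwa : w a = 0)
    (hwb : w b = 0) : w c = 0 := by
  classical
  rcases eq_or_ne c a with rfl | hca
  · exact hwa
  rcases eq_or_ne c b with rfl | hcb
  · exact hwb
  -- The form vanishing at all vectors of `s` but `v a`, `v b`, `v c` isolates the weight of `c`.
  set R := ((s.erase a).erase b).erase c with hR
  have hRcard : R.card = m := by
    rw [hR, card_erase_of_mem (by simp [*]), card_erase_of_mem (by simp [*, hab.symm]),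
      card_erase_of_mem ha, hcard]
    rfl
  have hsum := h (R.val.map v) (by simpa using hRcard)
  simp only [Multiset.map_map, Function.comp_def] at hsum
  change ∑ j ∈ s, w j * ∏ k ∈ R, det2 (v j) (v k) = 0 at hsum
  have hother : ∀ j ∈ s, j ≠ c → w j * ∏ k ∈ R, det2 (v j) (v k) = 0 := by
    intro j hj hjc
    by_cases hjR : j ∈ R
    · rw [prod_eq_zero hjR (by rw [det2]; ring), mul_zero]
    · obtain rfl | rfl : j = a ∨ j = b := by grind
      · rw [hwa, zero_mul]
      · rw [hwb, zero_mul]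
  rw [sum_eq_single_of_mem c hc hother, mul_eq_zero] at hsum
  refine hsum.resolve_right (prod_ne_zero_iff.2 fun k hk => hs hc ?_ ?_) <;> grind

variable [DecidableEq ι]

lemma sum_det2_mul_div_prod_erase {a : ι} (ha : a ∈ s)
    (hs : (s : Set ι).Pairwise fun i j => det2 (v i) (v j) ≠ 0) (F : ι → ℝ) :
    ∑ j ∈ s, det2 (v j) (v a) * F j / ∏ k ∈ s.erase j, det2 (v j) (v k) =
      ∑ j ∈ s.erase a, F j / ∏ k ∈ (s.erase a).erase j, det2 (v j) (v k) := by
  have hself : det2 (v a) (v a) = 0 := by rw [det2]; ring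
  rw [← sum_erase_add _ _ ha, hself, zero_mul, zero_div, add_zero]
  refine sum_congr rfl fun j hj => ?_
  obtain ⟨hja, hjs⟩ := mem_erase.1 hj
  rw [← mul_prod_erase (s.erase j) _ (mem_erase.2 ⟨hja.symm, ha⟩), erase_right_comm,
    mul_div_mul_left _ _ (hs hjs ha hja)]

/-- Writing one linear factor of the form as a combination of `det2 · (v a)` and `det2 · (v b)`
reduces the identity for `s` to those for `s.erase a` and `s.erase b`. -/
lemma sum_prod_det2_div_prod_erase_eq_zero (L : Multiset (ℝ × ℝ))
    (hs : (s : Set ι).Pairwise fun i j => det2 (v i) (v j) ≠ 0) (hcard : s.card = L.card + 2) :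
    ∑ j ∈ s, (L.map (det2 (v j))).prod / ∏ k ∈ s.erase j, det2 (v j) (v k) = 0 := by
  induction L using Multiset.induction generalizing s with
  | empty =>
    obtain ⟨a, b, hab, rfl⟩ := card_eq_two.1 hcard
    have hanti : det2 (v b) (v a) = -det2 (v a) (v b) := by simp only [det2]; ring
    have herase : ({a, b} : Finset ι).erase b = {a} := by
      rw [pair_comm, erase_insert (by simpa using hab.symm)]
    rw [sum_pair hab, erase_insert (by simpa using hab), herase]
    simp [hanti, inv_neg]
  | cons u L ih =>
    rw [Multiset.card_cons] at hcard
    obtain ⟨a, ha, b, hb, hab⟩ := one_lt_card.1 (show 1 < s.card by omega)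
    have hreduce {c : ι} (hc : c ∈ s) : ∑ j ∈ s, det2 (v j) (v c) * (L.map (det2 (v j))).prod /
        ∏ k ∈ s.erase j, det2 (v j) (v k) = 0 := by
      rw [sum_det2_mul_div_prod_erase hc hs]
      exact ih (hs.mono (coe_subset.2 (erase_subset _ _))) (by rw [card_erase_of_mem hc]; omega)
    obtain ⟨α, β, hu⟩ := exists_det2_eq_add (hs ha hb hab) u
    simp only [Multiset.map_cons, Multiset.prod_cons, hu, add_mul, mul_assoc, add_div,
      mul_div_assoc _ (_ * _), sum_add_distrib, ← mul_sum, hreduce ha, hreduce hb, mul_zero,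
      add_zero]

lemma annihilatesForms_det2_div_prod_erase
    (hs : (s : Set ι).Pairwise fun i j => det2 (v i) (v j) ≠ 0) (hcard : s.card = m + 3)
    (u : ℝ × ℝ) :
    AnnihilatesForms m s v fun j => det2 (v j) u / ∏ k ∈ s.erase j, det2 (v j) (v k) :=
  fun L hL => by
    rw [← sum_prod_det2_div_prod_erase_eq_zero (u ::ₘ L) hs (by rw [Multiset.card_cons]; omega)]
    refine sum_congr rfl fun j _ => ?_
    rw [Multiset.map_cons, Multiset.prod_cons, div_mul_eq_mul_div]

end BinaryForms

section GeneralPosition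

variable {n : ℕ} {q : Fin n → ℝ × ℝ}

/-- No three of the points are collinear. -/
def GeneralPosition (q : Fin n → ℝ × ℝ) : Prop :=
  ∀ ⦃i j k⦄, i ≠ j → i ≠ k → j ≠ k → orient (q i) (q j) (q k) ≠ 0

lemma GeneralPosition.pairwise_det2_ne_zero (hq : GeneralPosition q) (i : Fin n) :
    ((univ.erase i : Finset (Fin n)) : Set (Fin n)).Pairwise fun j k =>
      det2 (q i - q j) (q i - q k) ≠ 0 := fun j hj k hk hjk => by
  simp only [det2_sub_sub]
  exact hq (ne_of_mem_erase hj).symm (ne_of_mem_erase hk).symm hjk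

/-- The product of the brackets `[q i, q j, q k]` over all other vertices `k`: the denominator of
the stress weights on `{i, j}`. -/
def orientProd (q : Fin n → ℝ × ℝ) (i j : Fin n) : ℝ :=
  ∏ k ∈ (univ.erase i).erase j, orient (q i) (q j) (q k)

lemma GeneralPosition.orientProd_ne_zero (hq : GeneralPosition q) {i j : Fin n} (hij : i ≠ j) :
    orientProd q i j ≠ 0 :=
  prod_ne_zero_iff.2 fun _ hk =>
    hq hij (ne_of_mem_erase (mem_of_mem_erase hk)).symm (ne_of_mem_erase hk).symm

lemma orientProd_swap (q : Fin n → ℝ × ℝ) {i j : Fin n} (hij : i ≠ j) :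
    orientProd q j i = (-1) ^ n * orientProd q i j := by
  have hcard : n = #((univ.erase i).erase j) + 2 := by
    rw [card_erase_of_mem (by simpa using hij.symm), card_erase_of_mem (mem_univ i), card_univ,
      Fintype.card_fin]
    omega
  have hpow : (-1 : ℝ) ^ n = (-1) ^ #((univ.erase i).erase j) :=
    (congrArg ((-1 : ℝ) ^ ·) hcard).trans (by simp [pow_add])
  simp only [orientProd, erase_right_comm, orient_swap_left (q i) (q j), prod_neg, hpow]

end GeneralPosition

section Stress

variable {n m : ℕ} {q : Fin n → ℝ × ℝ}

/-- `c` is a stress of the complete graph: a linear dependency between the rows of `C_d(q)`. -/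
def IsStress_s5 (d : ℕ) (q : Fin n → ℝ × ℝ) (c : Pair n → ℝ) : Prop :=
  ∑ e, c e • cofRow d q e = 0

lemma IsStress_s5.sub {d : ℕ} {c c' : Pair n → ℝ} (h : IsStress_s5 d q c) (h' : IsStress_s5 d q c') :
    IsStress_s5 d q (c - c') := by
  rw [IsStress_s5] at h h' ⊢
  simp only [Pi.sub_apply, sub_smul, sum_sub_distrib, h, h', sub_zero]

lemma cvec_swap (a b : ℝ × ℝ) (t : Fin (m + 1)) :
    cvec (m + 1) b a t = (-1) ^ m * cvec (m + 1) a b t := by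
  have hpow : (-1 : ℝ) ^ m = (-1) ^ (m - (t : ℕ)) * (-1) ^ (t : ℕ) := by
    rw [← pow_add, Nat.sub_add_cancel (Nat.lt_succ_iff.1 t.2)]
  simp only [cvec, Nat.add_sub_cancel]
  rw [← neg_sub a.1, ← neg_sub a.2, neg_pow, neg_pow (a.2 - b.2), hpow]
  ring

/-- The weight with which `c` enters the equilibrium condition at `i` through the neighbour `j`.
The sign makes `c_{ij}` and `-c_{ji}` agree, so that at vertex `i` only the vectors
`cvec (m + 1) (q i) (q j)` occur; the value at `i = j` is irrelevant. -/
def spokeWeight (m : ℕ) (c : Pair n → ℝ) (i j : Fin n) : ℝ :=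
  if h : i < j then c ⟨(i, j), h⟩
  else if h : j < i then (-1) ^ (m + 1) * c ⟨(j, i), h⟩
  else 0

lemma spokeWeight_fst_snd (c : Pair n → ℝ) (e : Pair n) :
    spokeWeight m c e.val.1 e.val.2 = c e :=
  dif_pos e.2

lemma spokeWeight_snd_fst (c : Pair n → ℝ) (e : Pair n) :
    spokeWeight m c e.val.2 e.val.1 = (-1) ^ (m + 1) * c e := by
  rw [spokeWeight, dif_neg e.2.not_gt, dif_pos e.2]

lemma spokeWeight_swap (c : Pair n → ℝ) (i j : Fin n) :
    spokeWeight m c j i = (-1) ^ (m + 1) * spokeWeight m c i j := by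
  rcases lt_trichotomy i j with h | rfl | h
  · exact (spokeWeight_snd_fst c ⟨(i, j), h⟩).trans (by rw [spokeWeight, dif_pos h])
  · simp [spokeWeight]
  · rw [spokeWeight, dif_pos h, spokeWeight, dif_neg h.not_gt, dif_pos h, ← mul_assoc, ← mul_pow]
    simp

lemma sum_pair_incident (i : Fin n) (F : Fin n → ℝ) :
    ∑ e : Pair n, (if i = e.val.1 then F e.val.2 else if i = e.val.2 then F e.val.1 else 0) =
      ∑ j ∈ univ.erase i, F j := by
  have hsplit (x y : Fin n) :
      (if x < y then if i = x then F y else if i = y then F x else 0 else 0) =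
        (if i = x then if i < y then F y else 0 else 0) +
          (if i = y then if x < i then F x else 0 else 0) := by
    split_ifs <;> first | omega | simp
  rw [← sum_subtype (univ.filter fun x : Fin n × Fin n => x.1 < x.2) (by simp)
      (fun x => if i = x.1 then F x.2 else if i = x.2 then F x.1 else 0),
    sum_filter, Fintype.sum_prod_type]
  simp only [hsplit, sum_add_distrib]
  rw [sum_comm]
  simp only [sum_ite_eq, mem_univ, if_true]
  rw [← sum_add_distrib, ← sum_erase_add _ _ (mem_univ i)]
  simp only [lt_irrefl, if_false, add_zero]
  refine sum_congr rfl fun j hj => ?_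
  rcases (ne_of_mem_erase hj).lt_or_gt with h | h <;> simp [h, h.not_gt]

lemma sum_smul_cofRow_apply (q : Fin n → ℝ × ℝ) (c : Pair n → ℝ) (i : Fin n)
    (t : Fin (m + 1)) :
    (∑ e, c e • cofRow (m + 1) q e) (i, t) =
      ∑ j ∈ univ.erase i, spokeWeight m c i j * cvec (m + 1) (q i) (q j) t := by
  rw [← sum_pair_incident i fun j => spokeWeight m c i j * cvec (m + 1) (q i) (q j) t,
    Finset.sum_apply]
  refine sum_congr rfl fun e _ => ?_
  simp only [Pi.smul_apply, smul_eq_mul, cofRow]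
  split_ifs with h₁ h₂
  · rw [h₁, spokeWeight_fst_snd]
  · rw [h₂, spokeWeight_snd_fst, cvec_swap (q e.val.1), pow_succ]
    have hsq : ((-1 : ℝ) ^ m) * (-1) ^ m = 1 := by rw [← mul_pow]; norm_num
    linear_combination (c e * cvec (m + 1) (q e.val.1) (q e.val.2) t) * hsq
  · rw [mul_zero]

lemma isStress_iff_annihilatesForms (c : Pair n → ℝ) : IsStress_s5 (m + 1) q c ↔
    ∀ i, AnnihilatesForms m (univ.erase i) (fun j => q i - q j) (spokeWeight m c i) := by
  simp only [IsStress_s5, annihilatesForms_iff_monomials, funext_iff, Prod.forall,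
    sum_smul_cofRow_apply, Fin.forall_iff, Nat.lt_succ_iff]
  rfl

lemma IsStress_s5.spokeWeight_eq_zero {c : Pair n → ℝ} (hc : IsStress_s5 (m + 1) q c)
    (hq : GeneralPosition q) (hn : n = m + 4) {i j k : Fin n} (hij : i ≠ j) (hik : i ≠ k)
    (hjk : j ≠ k) (hcj : spokeWeight m c i j = 0) (hck : spokeWeight m c i k = 0)
    (l : Fin n) : spokeWeight m c i l = 0 := by
  rcases eq_or_ne i l with rfl | hil
  · simp [spokeWeight]
  exact ((isStress_iff_annihilatesForms c).1 hc i).eq_zero (hq.pairwise_det2_ne_zero i)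
    (by simp [hn]) (by simp [hij.symm]) (by simp [hik.symm]) (by simp [hil.symm]) hjk hcj hck

/-- Two edges of the triangle meet at each of `x` and `y`, so all weights at `x` and `y` vanish;
at every other vertex the spokes to `x` and `y` then force the rest. -/
lemma IsStress_s5.eq_zero_of_triangle {c : Pair n → ℝ} (hc : IsStress_s5 (m + 1) q c)
    (hq : GeneralPosition q) (hn : n = m + 4) {x y z : Fin n} (hxy : x < y) (hyz : y < z)
    (hcxy : c ⟨(x, y), hxy⟩ = 0) (hcxz : c ⟨(x, z), hxy.trans hyz⟩ = 0)
    (hcyz : c ⟨(y, z), hyz⟩ = 0) : c = 0 := by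
  have swap_zero {i j : Fin n} (h : spokeWeight m c i j = 0) : spokeWeight m c j i = 0 := by
    rw [spokeWeight_swap, h, mul_zero]
  have hwxy : spokeWeight m c x y = 0 := (spokeWeight_fst_snd c _).trans hcxy
  have hwxz : spokeWeight m c x z = 0 := (spokeWeight_fst_snd c _).trans hcxz
  have hwyz : spokeWeight m c y z = 0 := (spokeWeight_fst_snd c _).trans hcyz
  have hx := hc.spokeWeight_eq_zero hq hn hxy.ne (hxy.trans hyz).ne hyz.ne hwxy hwxz
  have hy := hc.spokeWeight_eq_zero hq hn hxy.ne' hyz.ne (hxy.trans hyz).ne (swap_zero hwxy) hwyz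
  have hall (i j : Fin n) : spokeWeight m c i j = 0 := by
    rcases eq_or_ne i x with rfl | hix
    · exact hx j
    rcases eq_or_ne i y with rfl | hiy
    · exact hy j
    exact hc.spokeWeight_eq_zero hq hn hix hiy hxy.ne (swap_zero (hx i)) (swap_zero (hy i)) j
  ext e
  rw [← spokeWeight_fst_snd (m := m) c e, hall, Pi.zero_apply]

/-- The stress of the complete graph given by the projective point `P`.  It vanishes on the pairs
whose line passes through `P`. -/
noncomputable def pointStress (q : Fin n → ℝ × ℝ) (P : Fin 3 → ℝ) (e : Pair n) : ℝ :=
  homOrient P (q e.val.1) (q e.val.2) / orientProd q e.val.1 e.val.2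

lemma pointStress_smul (q : Fin n → ℝ × ℝ) (t : ℝ) (P : Fin 3 → ℝ) :
    pointStress q (t • P) = t • pointStress q P := by
  ext e
  rw [pointStress, homOrient_smul, Pi.smul_apply, smul_eq_mul, pointStress, mul_div_assoc]

lemma pointStress_eq_zero_iff (hq : GeneralPosition q) (P : Fin 3 → ℝ) (e : Pair n) :
    pointStress q P e = 0 ↔ homOrient P (q e.val.1) (q e.val.2) = 0 := by
  rw [pointStress, div_eq_zero_iff, or_iff_left (hq.orientProd_ne_zero e.2.ne)]

lemma pointStress_homCoord_eq_zero_iff (hq : GeneralPosition q) (p : ℝ × ℝ) (e : Pair n) :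
    pointStress q (homCoord p) e = 0 ↔ onLine (q e.val.1) (q e.val.2) p := by
  rw [pointStress_eq_zero_iff hq, homOrient_homCoord, onLine_iff_orient_eq_zero]

lemma spokeWeight_pointStress (hn : n = m + 4) (P : Fin 3 → ℝ) {i j : Fin n} (hij : i ≠ j) :
    spokeWeight m (pointStress q P) i j = homOrient P (q i) (q j) / orientProd q i j := by
  rcases hij.lt_or_gt with h | h
  · exact spokeWeight_fst_snd _ ⟨(i, j), h⟩
  · have hpow : ((-1 : ℝ) ^ n)⁻¹ = (-1) ^ m := by
      rw [← inv_pow, inv_neg_one, hn, pow_add]; norm_num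
    refine (spokeWeight_snd_fst (m := m) (pointStress q P) ⟨(j, i), h⟩).trans ?_
    simp only [pointStress]
    rw [homOrient_swap P (q j), orientProd_swap q hij.symm, div_mul_eq_div_div_swap,
      div_eq_mul_inv _ ((-1 : ℝ) ^ n), hpow]
    ring

theorem isStress_pointStress (hq : GeneralPosition q) (hn : n = m + 4) (P : Fin 3 → ℝ) :
    IsStress_s5 (m + 1) q (pointStress q P) := by
  refine (isStress_iff_annihilatesForms _).2 fun i L hL => ?_
  rw [← annihilatesForms_det2_div_prod_erase (hq.pairwise_det2_ne_zero i) (by simp [hn])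
    (P 2 • q i - (P 0, P 1)) L hL]
  refine sum_congr rfl fun j hj => ?_
  rw [spokeWeight_pointStress hn P (ne_of_mem_erase hj).symm, homOrient_eq_det2, orientProd]
  simp only [det2_sub_sub]

theorem IsStress_s5.exists_eq_pointStress {c : Pair n → ℝ} (hc : IsStress_s5 (m + 1) q c)
    (hq : GeneralPosition q) (hn : n = m + 4) : ∃ P, c = pointStress q P := by
  obtain ⟨x, y, z, hxy, hyz⟩ := exists_fin_lt_lt (show 3 ≤ n by omega)
  have hxz := hxy.trans hyz
  obtain ⟨P, hPxy, hPxz, hPyz⟩ := exists_homOrient_eq (hq hxy.ne hxz.ne hyz.ne)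
    (c ⟨(x, y), hxy⟩ * orientProd q x y) (c ⟨(x, z), hxz⟩ * orientProd q x z)
    (c ⟨(y, z), hyz⟩ * orientProd q y z)
  refine ⟨P, sub_eq_zero.1 <| (hc.sub (isStress_pointStress hq hn P)).eq_zero_of_triangle hq hn
    hxy hyz ?_ ?_ ?_⟩
  · simp [pointStress, hPxy, hq.orientProd_ne_zero hxy.ne]
  · simp [pointStress, hPxz, hq.orientProd_ne_zero hxz.ne]
  · simp [pointStress, hPyz, hq.orientProd_ne_zero hyz.ne]

end Stress

section OffLine

variable {n m : ℕ} {q : Fin n → ℝ × ℝ}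

/-- The pairs whose line misses `p`, the support of the stress of `p`. -/
def offLine (q : Fin n → ℝ × ℝ) (p : ℝ × ℝ) : Set (Pair n) :=
  {e | ¬ onLine (q e.val.1) (q e.val.2) p}

lemma GeneralPosition.offLine_nonempty (hq : GeneralPosition q) (hn : 3 ≤ n) (p : ℝ × ℝ) :
    (offLine q p).Nonempty := by
  obtain ⟨x, y, z, hxy, hyz⟩ := exists_fin_lt_lt hn
  by_contra hempty
  have hline {i j : Fin n} (hij : i < j) : orient (q i) (q j) p = 0 := by
    by_contra h
    exact hempty ⟨⟨(i, j), hij⟩, h⟩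
  apply hq hxy.ne (hxy.trans hyz).ne hyz.ne
  rw [orient_eq_add_add _ _ _ p, orient_swap_left (q x) (q z), hline hxy, hline hyz,
    hline (hxy.trans hyz)]
  simp

theorem not_linearIndepOn_cofRow_offLine (hq : GeneralPosition q) (hn : n = m + 4) (p : ℝ × ℝ) :
    ¬ LinearIndepOn ℝ (cofRow (m + 1) q) (offLine q p) := by
  rw [linearIndepOn_iff_forall_sum_eq_zero]
  intro hli
  obtain ⟨e, he⟩ := hq.offLine_nonempty (by omega) p
  have hzero : pointStress q (homCoord p) = 0 :=
    hli _ (fun f hf => (pointStress_homCoord_eq_zero_iff hq p f).2 (not_not.1 hf))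
      (isStress_pointStress hq hn _)
  exact he ((pointStress_homCoord_eq_zero_iff hq p e).1 (congrFun hzero e))

theorem linearIndepOn_cofRow_of_ssubset_offLine (hq : GeneralPosition q) (hn : n = m + 4)
    {p : ℝ × ℝ} {f g : Pair n}
    (hfg : det2 (q f.val.2 - q f.val.1) (q g.val.2 - q g.val.1) ≠ 0)
    (hf : onLine (q f.val.1) (q f.val.2) p) (hg : onLine (q g.val.1) (q g.val.2) p)
    {S : Set (Pair n)} (hS : S ⊂ offLine q p) : LinearIndepOn ℝ (cofRow (m + 1) q) S := by
  obtain ⟨hsub, e, he, heS⟩ := Set.ssubset_iff_exists.1 hS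
  refine linearIndepOn_iff_forall_sum_eq_zero.2 fun c hcS hc => ?_
  obtain ⟨P, rfl⟩ := IsStress_s5.exists_eq_pointStress hc hq hn
  have hP {e : Pair n} (he : onLine (q e.val.1) (q e.val.2) p) :
      homOrient P (q e.val.1) (q e.val.2) = 0 :=
    (pointStress_eq_zero_iff hq P e).1 (hcS e fun h => hsub h he)
  have hPp : P = P 2 • homCoord p := eq_smul_homCoord_of_onLine hfg hf hg (hP hf) (hP hg)
  have hP2 : P 2 = 0 := by
    have hce := hcS e heS
    rw [hPp, pointStress_smul, Pi.smul_apply, smul_eq_mul, mul_eq_zero,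
      pointStress_homCoord_eq_zero_iff hq] at hce
    exact hce.resolve_right he
  rw [hPp, hP2, pointStress_smul, zero_smul]

end OffLine

section ConvexPosition

variable {n : ℕ} {q : Fin n → ℝ × ℝ}

lemma ConvexPosition.orient_pos (hq : ConvexPosition q) {i j k : Fin n} (hij : i < j)
    (hk : k < i ∨ j < k) : 0 < orient (q i) (q j) (q k) := by
  rcases hk with hk | hk
  · rw [orient_rotate]
    exact hq.2 k i j hk hij
  · exact hq.2 i j k hij hk

lemma ConvexPosition.orient_neg (hq : ConvexPosition q) {i j k : Fin n} (hik : i < k)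
    (hkj : k < j) : orient (q i) (q j) (q k) < 0 := by
  rw [orient_swap_right, neg_lt_zero]
  exact hq.2 i k j hik hkj

lemma ConvexPosition.orient_nonneg (hq : ConvexPosition q) {i j k : Fin n} (hij : i < j)
    (hk : k ≤ i ∨ j ≤ k) : 0 ≤ orient (q i) (q j) (q k) := by
  rcases eq_or_ne k i with rfl | hki
  · rw [orient_self_left]
  rcases eq_or_ne k j with rfl | hkj
  · rw [orient_self_right]
  exact (hq.orient_pos hij (hk.imp hki.lt_of_le hkj.symm.lt_of_le)).le

lemma ConvexPosition.orient_nonpos (hq : ConvexPosition q) {i j k : Fin n} (hik : i ≤ k)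
    (hkj : k ≤ j) : orient (q i) (q j) (q k) ≤ 0 := by
  rcases hik.eq_or_lt with rfl | hik
  · rw [orient_self_left]
  rcases hkj.eq_or_lt with rfl | hkj
  · rw [orient_self_right]
  exact (hq.orient_neg hik hkj).le

lemma ConvexPosition.generalPosition (hq : ConvexPosition q) : GeneralPosition q := by
  have key {i j k : Fin n} (hij : i < j) (hik : i ≠ k) (hjk : j ≠ k) :
      orient (q i) (q j) (q k) ≠ 0 := by
    by_cases h : i < k ∧ k < j
    · exact (hq.orient_neg h.1 h.2).ne
    · exact (hq.orient_pos hij (by omega)).ne'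
  intro i j k hij hik hjk
  rcases hij.lt_or_gt with h | h
  · exact key h hik hjk
  · rw [orient_swap_left, neg_ne_zero]
    exact key h hjk hik

lemma ConvexPosition.orient_mul_orient_neg_of_cross (hq : ConvexPosition q) {e f : Pair n}
    (hef : Cross e f) :
    orient (q e.val.1) (q e.val.2) (q f.val.1) *
      orient (q e.val.1) (q e.val.2) (q f.val.2) < 0 := by
  rcases hef with ⟨h₁, h₂, h₃⟩ | ⟨h₁, h₂, h₃⟩
  · exact mul_neg_of_neg_of_pos (hq.orient_neg h₁ h₂) (hq.orient_pos e.2 (.inr h₃))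
  · exact mul_neg_of_pos_of_neg (hq.orient_pos e.2 (.inl h₁)) (hq.orient_neg h₂ h₃)

lemma ConvexPosition.orient_mul_orient_nonneg_of_not_cross (hq : ConvexPosition q)
    {e f : Pair n} (hef : ¬ Cross e f) :
    0 ≤ orient (q e.val.1) (q e.val.2) (q f.val.1) *
      orient (q e.val.1) (q e.val.2) (q f.val.2) := by
  have he := e.2
  have hf := f.2
  rw [Cross] at hef
  by_cases hin : e.val.1 ≤ f.val.1 ∧ f.val.2 ≤ e.val.2
  · exact mul_nonneg_of_nonpos_of_nonpos (hq.orient_nonpos hin.1 (hf.le.trans hin.2))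
      (hq.orient_nonpos (hin.1.trans hf.le) hin.2)
  · exact mul_nonneg (hq.orient_nonneg he (by omega)) (hq.orient_nonneg he (by omega))

lemma GeneralPosition.orient_ne_zero_or_of_ne (hq : GeneralPosition q) {e f : Pair n}
    (hef : e ≠ f) :
    orient (q e.val.1) (q e.val.2) (q f.val.1) ≠ 0 ∨
      orient (q e.val.1) (q e.val.2) (q f.val.2) ≠ 0 := by
  have he := e.2
  have : f.val.1 < f.val.2 := f.2
  have hval : ¬ (e.val.1 = f.val.1 ∧ e.val.2 = f.val.2) := fun h =>
    hef (Subtype.ext (Prod.ext h.1 h.2))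
  by_cases h : e.val.1 = f.val.1 ∨ e.val.2 = f.val.1
  · exact .inr (hq he.ne (by omega) (by omega))
  · exact .inl (hq he.ne (by omega) (by omega))

lemma ConvexPosition.det2_ne_zero_of_cross (hq : ConvexPosition q) {e f : Pair n}
    (hef : Cross e f) : det2 (q e.val.2 - q e.val.1) (q f.val.2 - q f.val.1) ≠ 0 := by
  rw [det2_sub_sub_eq_orient_sub, sub_ne_zero]
  intro h
  have hneg := hq.orient_mul_orient_neg_of_cross hef
  rw [h] at hneg
  exact (mul_self_nonneg _).not_gt hneg

lemma ConvexPosition.not_onLine_of_not_cross (hq : ConvexPosition q) {p : ℝ × ℝ}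
    {e f g : Pair n} (hef : e ≠ f) (hncross : ¬ Cross e f) (hgf : Cross g f)
    (hf : onLine (q f.val.1) (q f.val.2) p) (hg : onLine (q g.val.1) (q g.val.2) p) :
    ¬ onLine (q e.val.1) (q e.val.2) p :=
  not_onLine_of_mem_openSegment
    (mem_openSegment_of_onLine (hq.orient_mul_orient_neg_of_cross hgf) hf hg)
    (hq.orient_mul_orient_nonneg_of_not_cross hncross)
    (hq.generalPosition.orient_ne_zero_or_of_ne hef)

end ConvexPosition

section Triangulation

variable {n k : ℕ}

lemma isTriangulation_of_forall_notMem {T : Set (Pair n)} (hT : CrossingFree n k T)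
    (hmax : ∀ e ∉ T, ¬ CrossingFree n k (insert e T)) : IsTriangulation n k T := by
  refine ⟨hT, fun S hS hTS => Set.Subset.antisymm (fun e heS => ?_) hTS⟩
  by_contra heT
  refine hmax e heT fun ⟨C, hC, hcard, hcross⟩ => hS ⟨C, hC.trans ?_, hcard, hcross⟩
  exact Set.insert_subset heS hTS

lemma exists_strictMono_of_pairwise_cross {C : Finset (Pair n)} (hcard : C.card = k)
    (hC : ∀ e ∈ C, ∀ f ∈ C, e ≠ f → Cross e f) :
    ∃ e : Fin k → Pair n, (∀ i, e i ∈ C) ∧ ∀ i j, i < j →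
      (e i).val.1 < (e j).val.1 ∧ (e j).val.1 < (e i).val.2 ∧ (e i).val.2 < (e j).val.2 := by
  have hinj : Set.InjOn (fun e : Pair n => e.val.1) C := fun e he f hf hef => by
    by_contra hne
    rcases hC e he f hf hne with h | h
    · exact h.1.ne hef
    · exact h.1.ne' hef
  have hfirst : #(C.image fun e => e.val.1) = k := by rw [card_image_of_injOn hinj, hcard]
  have hmem (i : Fin k) := mem_image.1 (orderEmbOfFin_mem _ hfirst i)
  choose e heC he using hmem
  refine ⟨e, heC, fun i j hij => ?_⟩
  have hlt : (e i).val.1 < (e j).val.1 := by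
    rw [he, he]
    exact (orderEmbOfFin _ hfirst).strictMono hij
  refine (hC _ (heC i) _ (heC j) fun h => hlt.ne (by rw [h])).resolve_right fun h => ?_
  exact h.1.not_gt hlt

instance decidableCross (e f : Pair n) : Decidable (Cross e f) :=
  inferInstanceAs (Decidable (_ ∨ _))

end Triangulation

section NinePoints

instance decidableMemE5 : DecidablePred (· ∈ E5) := fun _ =>
  inferInstanceAs (Decidable (_ ∧ _ ∧ _))

lemma eq_of_notMem_E5 : ∀ e ∉ E5,
    e = ⟨(0, 5), by decide⟩ ∨ e = ⟨(2, 6), by decide⟩ ∨ e = ⟨(3, 8), by decide⟩ := by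
  decide

lemma crossingFree_E5 : CrossingFree 9 3 E5 := by
  rintro ⟨C, hCE, hcard, hC⟩
  obtain ⟨e, heC, hcross⟩ := exists_strictMono_of_pairwise_cross hcard hC
  have h₀₁ := hcross 0 1 (by decide)
  have h₁₂ := hcross 1 2 (by decide)
  have h₂₃ := hcross 2 3 (by decide)
  have h₀₃ := hcross 0 3 (by decide)
  have hE (i : Fin 4) := hCE (heC i)
  simp only [E5, Set.mem_ofPred_eq, ne_eq, Prod.ext_iff] at hE
  have hE₀ := hE 0
  have hE₁ := hE 1
  have hE₂ := hE 2
  have hE₃ := hE 3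
  omega

lemma exists_crossing_of_notMem_E5 {e : Pair 9} (he : e ∉ E5) :
    ∃ C : Finset (Pair 9), (∀ f ∈ C, f = e ∨ f ∈ E5) ∧ #C = 4 ∧
      ∀ f ∈ C, ∀ g ∈ C, f ≠ g → Cross f g := by
  rcases eq_of_notMem_E5 e he with rfl | rfl | rfl
  · refine ⟨{⟨(0, 5), by decide⟩, ⟨(1, 6), by decide⟩, ⟨(2, 7), by decide⟩, ⟨(4, 8), by decide⟩},
      ?_, ?_, ?_⟩ <;> decide
  · refine ⟨{⟨(1, 5), by decide⟩, ⟨(2, 6), by decide⟩, ⟨(3, 7), by decide⟩, ⟨(4, 8), by decide⟩},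
      ?_, ?_, ?_⟩ <;> decide
  · refine ⟨{⟨(0, 4), by decide⟩, ⟨(1, 5), by decide⟩, ⟨(2, 7), by decide⟩, ⟨(3, 8), by decide⟩},
      ?_, ?_, ?_⟩ <;> decide

theorem isTriangulation_E5 : IsTriangulation 9 3 E5 :=
  isTriangulation_of_forall_notMem crossingFree_E5 fun _ he hfree =>
    hfree (exists_crossing_of_notMem_E5 he)

lemma E5_eq_offLine {q : Fin 9 → ℝ × ℝ} (hq : ConvexPosition q) {p : ℝ × ℝ}
    (h05 : onLine (q 0) (q 5) p) (h26 : onLine (q 2) (q 6) p) (h38 : onLine (q 3) (q 8) p) :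
    E5 = offLine q p := by
  have hline : ∀ f ∉ E5, onLine (q f.val.1) (q f.val.2) p := fun f hf => by
    rcases eq_of_notMem_E5 f hf with rfl | rfl | rfl <;> assumption
  have hcomb : ∀ e ∈ E5, ∃ f ∉ E5, ∃ g ∉ E5, ¬ Cross e f ∧ Cross g f := by decide
  ext e
  refine ⟨fun he => ?_, fun he => ?_⟩
  · obtain ⟨f, hf, g, hg, hef, hgf⟩ := hcomb e he
    exact hq.not_onLine_of_not_cross (ne_of_mem_of_not_mem he hf) hef hgf (hline f hf) (hline g hg)
  · by_contra h
    exact he (hline e h)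

end NinePoints

/-- If `q₁,…,q₉` are in convex position and the lines through `q₁q₆`, `q₃q₇`
and `q₄q₉` are concurrent, then `E = K₉ - {16,37,49}` is a 3-triangulation of the 9-gon and the
rows of `C₆(q)` indexed by `E` form a circuit. -/
theorem stmt5 (q : Fin 9 → ℝ × ℝ) (hq : ConvexPosition q)
    (hconc : ∃ p : ℝ × ℝ,
      onLine (q 0) (q 5) p ∧ onLine (q 2) (q 6) p ∧ onLine (q 3) (q 8) p) :
    IsTriangulation 9 3 E5 ∧
    ¬ LinearIndependent ℝ (fun e : E5 => cofRow 6 q e.val) ∧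
    ∀ S : Set (Pair 9), S ⊂ E5 →
      LinearIndependent ℝ (fun e : S => cofRow 6 q e.val) := by
  obtain ⟨p, h05, h26, h38⟩ := hconc
  have hE : E5 = offLine q p := E5_eq_offLine hq h05 h26 h38
  have hcross : Cross (⟨(0, 5), by decide⟩ : Pair 9) ⟨(2, 6), by decide⟩ := by decide
  refine ⟨isTriangulation_E5, ?_, fun S hS => ?_⟩
  · rw [hE]
    exact not_linearIndepOn_cofRow_offLine hq.generalPosition rfl p
  · rw [hE] at hS
    exact linearIndepOn_cofRow_of_ssubset_offLine hq.generalPosition rfl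
      (hq.det2_ne_zero_of_cross hcross) h05 h26 hS
end

section
/- Let k ≥ 1 and n ≥ 2k+1. Let B = {{i, n−k+i} : i = 1,…,k}, a set of pairs of {1,…,n+1} (each of length k+1 with respect to n+1, having n+1 on its short arc). Let S be any set of pairs of {1,…,n+1}, each of length at least k+1 with respect to n+1, with S ∩ B = ∅. Then S ∪ B is (k+1)-crossing-free if and only if the following three conditions hold: no pair of S contains the vertex n+1; every pair of S has length at least k+1 with respect to n (i.e., is k-relevant in the n-gon); and S is (k+1)-crossing-free. (Hence the reduced multiassociahedron of the n-gon equals the link of B in the reduced multiassociahedron of the (n+1)-gon.) -/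
open scoped BigOperators

/-- The set `B = {{i, n-k+i} : i = 1,…,k}` of pairs of `{1,…,n+1}` (0-indexed:
`{(j, n-k+j) : j = 0,…,k-1}`). -/
def Bset (n k : ℕ) : Set (Pair (n + 1)) :=
  {e | ∃ j : ℕ, j < k ∧ (e.val.1 : ℕ) = j ∧ (e.val.2 : ℕ) = n - k + j}

/-!
In a family of pairwise crossing pairs no two share a vertex, and each pair has exactly one
endpoint on either arc cut off by a given member `e`. Hence `e` lies in no family of pairwise
crossing pairs with more members than its length: adding pairs that are not `k`-relevant does not
affect `(k+1)`-crossing-freeness.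

The pairs of `B` are exactly those of the `(n+1)`-gon that avoid the vertex `n+1` and lose their
`k`-relevance when that vertex is deleted, so next to a set `S` avoiding `n+1` they are harmless.
Conversely, `B` consists of `k` pairwise crossing pairs, and each `k`-relevant pair at the vertex
`n+1` crosses them all.
-/

section

variable {n k : ℕ}

theorem Cross.symm {e f : Pair n} (h : Cross e f) : Cross f e :=
  Or.symm h

theorem crossingFree_iff_forall_ncard_le {S : Set (Pair n)} :
    CrossingFree n k S ↔ ∀ C ⊆ S, C.Pairwise Cross → C.ncard ≤ k := by
  classical
  constructor
  · intro hS C hCS hC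
    by_contra! hcard
    obtain ⟨D, hDC, hD⟩ := Set.exists_subset_card_eq (Nat.succ_le_of_lt hcard)
    refine hS ⟨D.toFinset, ?_, ?_, fun e he f hf hef ↦ ?_⟩
    · simpa using hDC.trans hCS
    · rw [← Set.ncard_eq_toFinset_card', hD]
    · exact hC (hDC (Set.mem_toFinset.mp he)) (hDC (Set.mem_toFinset.mp hf)) hef
  · rintro h ⟨C, hCS, hcard, hC⟩
    have hle := h C hCS fun e he f hf ↦ hC e he f hf
    rw [Set.ncard_coe_finset, hcard] at hle
    omega

section PairwiseCrossing

variable {C : Set (Pair n)}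

theorem injOn_of_pairwise_cross (hC : C.Pairwise Cross) {v : Pair n → ℕ}
    (hv : ∀ e ∈ C, v e = e.val.1 ∨ v e = e.val.2) : C.InjOn v := by
  intro e he f hf hef
  by_contra hne
  have hcross := hC he hf hne
  have hve := hv e he
  have hvf := hv f hf
  simp only [Cross, Fin.lt_def] at hcross
  omega

theorem ncard_le_card_of_pairwise_cross (hC : C.Pairwise Cross) {t : Finset ℕ}
    (ht : ∀ e ∈ C, (e.val.1 : ℕ) ∈ t ∨ (e.val.2 : ℕ) ∈ t) : C.ncard ≤ t.card := by
  let v : Pair n → ℕ := fun e ↦ if (e.val.1 : ℕ) ∈ t then e.val.1 else e.val.2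
  have hvt : ∀ e ∈ C, v e ∈ (t : Set ℕ) := by
    intro e he
    have := ht e he
    grind
  have hv : C.InjOn v := injOn_of_pairwise_cross hC fun e _ ↦ by grind
  simpa using Set.ncard_le_ncard_of_injOn v hvt hv

theorem ncard_le_pairLen_of_pairwise_cross (hC : C.Pairwise Cross) {m : ℕ}
    (hm : ∀ f ∈ C, (f.val.2 : ℕ) < m) {e : Pair n} (he : e ∈ C) : C.ncard ≤ pairLen m e := by
  have he_lt : (e.val.1 : ℕ) < e.val.2 := e.property
  have hcross : ∀ f ∈ C, f = e ∨ Cross f e := fun f hf ↦ or_iff_not_imp_left.mpr (hC hf he)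
  simp only [Cross, Fin.lt_def] at hcross
  have inner : C.ncard ≤ (Finset.Ico (e.val.1 : ℕ) e.val.2).card := by
    refine ncard_le_card_of_pairwise_cross hC fun f hf ↦ ?_
    rw [Finset.mem_Ico, Finset.mem_Ico]
    rcases hcross f hf with rfl | h <;> omega
  have outer : C.ncard ≤ (Finset.range e.val.1 ∪ Finset.Ico (e.val.2 : ℕ) m).card := by
    refine ncard_le_card_of_pairwise_cross hC fun f hf ↦ ?_
    have := hm f hf
    simp only [Finset.mem_union, Finset.mem_range, Finset.mem_Ico]
    rcases hcross f hf with rfl | h <;> omega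
  have outer_card := Finset.card_union_le (Finset.range e.val.1) (Finset.Ico (e.val.2 : ℕ) m)
  have := hm e he
  simp only [Finset.card_range, Nat.card_Ico] at inner outer_card
  exact le_min inner (by omega)

end PairwiseCrossing

theorem crossingFree_union_iff_of_not_relevant {S T : Set (Pair n)} {m : ℕ}
    (hm : ∀ e ∈ S ∪ T, (e.val.2 : ℕ) < m) (hT : ∀ e ∈ T, ¬ Relevant m k e) :
    CrossingFree n k (S ∪ T) ↔ CrossingFree n k S := by
  simp only [crossingFree_iff_forall_ncard_le]
  refine ⟨fun h C hCS ↦ h C (hCS.trans Set.subset_union_left), fun h C hCST hC ↦ ?_⟩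
  by_cases hCT : ∃ e ∈ C, e ∈ T
  · obtain ⟨e, heC, heT⟩ := hCT
    have hlen := ncard_le_pairLen_of_pairwise_cross hC (fun f hf ↦ hm f (hCST hf)) heC
    exact hlen.trans (Nat.lt_succ_iff.mp (not_le.mp (hT e heT)))
  · exact h C (fun e he ↦ (hCST he).resolve_right fun heT ↦ hCT ⟨e, he, heT⟩) hC

theorem mem_Bset_iff (hn : 2 * k + 1 ≤ n) {e : Pair (n + 1)} :
    e ∈ Bset n k ↔ (e.val.2 : ℕ) < n ∧ Relevant (n + 1) k e ∧ ¬ Relevant n k e := by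
  simp only [Bset, Relevant, pairLen, Set.mem_ofPred_eq]
  constructor
  · rintro ⟨j, hj, hfst, hsnd⟩
    omega
  · rintro ⟨hlt, hrel, hirrel⟩
    exact ⟨e.val.1, by omega, rfl, by omega⟩

theorem pairwise_cross_Bset (hn : 2 * k ≤ n) : (Bset n k).Pairwise Cross := by
  rintro e ⟨i, hi, he⟩ f ⟨j, hj, hf⟩ hef
  have hij : i ≠ j := by
    rintro rfl
    exact hef (Subtype.ext (Prod.ext (Fin.ext (by omega)) (Fin.ext (by omega))))
  simp only [Cross, Fin.lt_def]
  omega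

theorem ncard_Bset (hkn : k < n) : (Bset n k).ncard = k := by
  have hinj : (Bset n k).InjOn fun e ↦ (e.val.1 : ℕ) := by
    rintro e ⟨i, -, he⟩ f ⟨j, -, hf⟩ (hef : (e.val.1 : ℕ) = f.val.1)
    exact Subtype.ext (Prod.ext (Fin.ext hef) (Fin.ext (by omega)))
  have himage : (fun e ↦ (e.val.1 : ℕ)) '' Bset n k = Set.Iio k := by
    ext j
    constructor
    · rintro ⟨e, ⟨i, hi, rfl, -⟩, rfl⟩
      exact hi
    · intro (hj : j < k)
      refine ⟨⟨(⟨j, by omega⟩, ⟨n - k + j, by omega⟩), ?_⟩, ⟨j, hj, rfl, rfl⟩, rfl⟩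
      exact Fin.mk_lt_mk.mpr (by omega)
  rw [← hinj.ncard_image, himage, Set.ncard_Iio_nat]

theorem cross_of_mem_Bset {e f : Pair (n + 1)} (hlast : (e.val.2 : ℕ) = n)
    (hrel : Relevant (n + 1) k e) (hf : f ∈ Bset n k) : Cross e f := by
  obtain ⟨j, hj, hfst, hsnd⟩ := hf
  simp only [Relevant, pairLen] at hrel
  simp only [Cross, Fin.lt_def]
  omega

theorem CrossingFree.snd_lt_of_Bset_subset {T : Set (Pair (n + 1))}
    (hT : CrossingFree (n + 1) k T) (hB : Bset n k ⊆ T) {e : Pair (n + 1)} (he : e ∈ T)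
    (hrel : Relevant (n + 1) k e) : (e.val.2 : ℕ) < n := by
  by_contra hlt
  have hlast : (e.val.2 : ℕ) = n := by omega
  have hn : 2 * k + 1 ≤ n := by
    simp only [Relevant, pairLen] at hrel
    omega
  have hcross : (insert e (Bset n k)).Pairwise Cross :=
    (pairwise_cross_Bset (by omega)).insert fun f hf _ ↦
      have hef := cross_of_mem_Bset hlast hrel hf
      ⟨hef, hef.symm⟩
  have heB : e ∉ Bset n k := fun h ↦ hlt ((mem_Bset_iff hn).mp h).1
  have hcard := crossingFree_iff_forall_ncard_le.mp hT _ (Set.insert_subset he hB) hcross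
  rw [Set.ncard_insert_of_notMem heB, ncard_Bset (by omega)] at hcard
  omega

end

/-- For `k ≥ 1`, `n ≥ 2k+1`, and any set `S` of `k`-relevant pairs of the
`(n+1)`-gon disjoint from `B`, the union `S ∪ B` is `(k+1)`-crossing-free iff no pair of `S`
uses vertex `n+1`, every pair of `S` is `k`-relevant in the `n`-gon, and `S` is
`(k+1)`-crossing-free. -/
theorem stmt6 (k n : ℕ) (hk : 1 ≤ k) (hn : 2 * k + 1 ≤ n)
    (S : Set (Pair (n + 1)))
    (hSrel : ∀ e ∈ S, k + 1 ≤ pairLen (n + 1) e)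
    (hSB : S ∩ Bset n k = ∅) :
    CrossingFree (n + 1) k (S ∪ Bset n k) ↔
      ((∀ e ∈ S, (e.val.1 : ℕ) ≠ n ∧ (e.val.2 : ℕ) ≠ n) ∧
       (∀ e ∈ S, k + 1 ≤ pairLen n e) ∧
       CrossingFree (n + 1) k S) := by
  have hB : ∀ e ∈ Bset n k, (e.val.2 : ℕ) < n ∧ ¬ Relevant n k e := fun e he ↦
    have h := (mem_Bset_iff hn).mp he
    ⟨h.1, h.2.2⟩
  have hunion (hS : ∀ e ∈ S, (e.val.2 : ℕ) < n) :
      CrossingFree (n + 1) k (S ∪ Bset n k) ↔ CrossingFree (n + 1) k S :=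
    crossingFree_union_iff_of_not_relevant
      (fun e he ↦ he.elim (hS e) fun heB ↦ (hB e heB).1) fun e he ↦ (hB e he).2
  constructor
  · intro hfree
    have hS : ∀ e ∈ S, (e.val.2 : ℕ) < n := fun e he ↦
      hfree.snd_lt_of_Bset_subset Set.subset_union_right (Or.inl he) (hSrel e he)
    refine ⟨fun e he ↦ ⟨((Fin.lt_def.mp e.property).trans (hS e he)).ne, (hS e he).ne⟩,
      fun e he ↦ ?_, (hunion hS).mp hfree⟩
    by_contra hirrel
    exact Set.disjoint_left.mp (Set.disjoint_iff_inter_eq_empty.mpr hSB) he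
      ((mem_Bset_iff hn).mpr ⟨hS e he, hSrel e he, hirrel⟩)
  · rintro ⟨hlast, -, hfree⟩
    exact (hunion fun e he ↦ lt_of_le_of_ne (Fin.le_last e.val.2) (hlast e he).2).mpr hfree
end
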